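/- There is no algorithm which takes as input two tuples (h_1,…,h_15) and (h'_1,…,h'_15) of elements of GL(4,ℤ) and decides whether the two semidirect products ℤ⁴ ⋊ F₁₅, in which the i-th free generator of F₁₅ acts on ℤ⁴ by the matrix h_i (respectively h'_i), are isomorphic as groups. Formally: the predicate on pairs (f, g) of functions Fin 15 → GL(4,ℤ) asserting that ℤ⁴ ⋊_{φ_f} FreeGroup (Fin 15) is isomorphic to ℤ⁴ ⋊_{φ_g} FreeGroup (Fin 15) — where φ_f : FreeGroup (Fin 15) → Aut(ℤ⁴) is the homomorphism sending the i-th generator to the automorphism of ℤ⁴ given by f(i) — is not a computable predicate. -/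

import Mathlib

namespace GLPrimcodable

theorem encode_int_ofNat (n : ℕ) : Encodable.encode (Int.ofNat n) = 2 * n := rfl
theorem encode_int_natCast (n : ℕ) : Encodable.encode ((n : ℤ)) = 2 * n := rfl
theorem encode_int_negSucc (n : ℕ) : Encodable.encode (Int.negSucc n) = 2 * n + 1 := rfl

theorem primrec_toNat : Primrec Int.toNat := by
  have hg : Primrec (fun c : ℕ => if c % 2 = 0 then c / 2 else 0) :=
    Primrec.ite
      (PrimrecRel.comp Primrec.eq (Primrec.nat_mod.comp .id (.const 2)) (.const 0))
      (Primrec.nat_div.comp .id (.const 2)) (.const 0)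
  have h := hg.comp (Primrec.encode (α := ℤ))
  refine h.of_eq ?_
  rintro (n | n)
  · rw [encode_int_ofNat]
    simp only [Int.ofNat_eq_natCast]
    split_ifs with h1 <;> omega
  · rw [encode_int_negSucc, Int.negSucc_eq]
    split_ifs with h1 <;> omega

theorem primrec_negToNat : Primrec (fun z : ℤ => (-z).toNat) := by
  have hg : Primrec (fun c : ℕ => if c % 2 = 1 then c / 2 + 1 else 0) :=
    Primrec.ite
      (PrimrecRel.comp Primrec.eq (Primrec.nat_mod.comp .id (.const 2)) (.const 1))
      (Primrec.succ.comp (Primrec.nat_div.comp .id (.const 2))) (.const 0)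
  have h := hg.comp (Primrec.encode (α := ℤ))
  refine h.of_eq ?_
  rintro (n | n)
  · rw [encode_int_ofNat]
    simp only [Int.ofNat_eq_natCast]
    split_ifs with h1 <;> omega
  · rw [encode_int_negSucc, Int.negSucc_eq]
    split_ifs with h1 <;> omega

theorem primrec_intSubNat : Primrec₂ (fun a b : ℕ => (a : ℤ) - b) := by
  have hg : Primrec (fun p : ℕ × ℕ =>
      Denumerable.ofNat ℤ (if p.2 ≤ p.1 then 2 * (p.1 - p.2) else 2 * (p.2 - p.1) - 1)) :=
    (Primrec.ofNat ℤ).comp <|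
      Primrec.ite (PrimrecRel.comp Primrec.nat_le Primrec.snd Primrec.fst)
        ((Primrec.nat_mul.comp (.const 2) (Primrec.nat_sub.comp .fst .snd)))
        (Primrec.nat_sub.comp (Primrec.nat_mul.comp (.const 2)
          (Primrec.nat_sub.comp .snd .fst)) (.const 1))
  refine Primrec₂.mk (hg.of_eq ?_)
  rintro ⟨a, b⟩
  by_cases h : b ≤ a
  · have h1 : ((a : ℤ) - b) = ((a - b : ℕ) : ℤ) := by omega
    rw [if_pos h, h1, show (2 * (a - b) = Encodable.encode (((a - b : ℕ) : ℤ))) from rfl,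
      Denumerable.ofNat_encode]
  · have h1 : ((a : ℤ) - b) = Int.negSucc (b - a - 1) := by
      rw [Int.negSucc_eq]; omega
    have h2 : 2 * (b - a) - 1 = Encodable.encode (Int.negSucc (b - a - 1)) := by
      rw [encode_int_negSucc]; omega
    rw [if_neg h, h1, h2, Denumerable.ofNat_encode]

theorem toNat_sub_neg_toNat (z : ℤ) : (z.toNat : ℤ) - (-z).toNat = z := by omega

theorem primrec_int_add : Primrec₂ ((· + ·) : ℤ → ℤ → ℤ) := by
  have h : Primrec (fun p : ℤ × ℤ =>
      ((p.1.toNat + p.2.toNat : ℕ) : ℤ) - ((-p.1).toNat + (-p.2).toNat : ℕ)) :=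
    primrec_intSubNat.comp
      (Primrec.nat_add.comp (primrec_toNat.comp .fst) (primrec_toNat.comp .snd))
      (Primrec.nat_add.comp (primrec_negToNat.comp .fst) (primrec_negToNat.comp .snd))
  refine Primrec₂.mk (h.of_eq ?_)
  rintro ⟨a, b⟩
  push_cast
  omega

theorem primrec_int_mul : Primrec₂ ((· * ·) : ℤ → ℤ → ℤ) := by
  have h : Primrec (fun p : ℤ × ℤ =>
      ((p.1.toNat * p.2.toNat + (-p.1).toNat * (-p.2).toNat : ℕ) : ℤ) -
        (p.1.toNat * (-p.2).toNat + (-p.1).toNat * p.2.toNat : ℕ)) :=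
    primrec_intSubNat.comp
      (Primrec.nat_add.comp
        (Primrec.nat_mul.comp (primrec_toNat.comp .fst) (primrec_toNat.comp .snd))
        (Primrec.nat_mul.comp (primrec_negToNat.comp .fst) (primrec_negToNat.comp .snd)))
      (Primrec.nat_add.comp
        (Primrec.nat_mul.comp (primrec_toNat.comp .fst) (primrec_negToNat.comp .snd))
        (Primrec.nat_mul.comp (primrec_negToNat.comp .fst) (primrec_toNat.comp .snd)))
  refine Primrec₂.mk (h.of_eq ?_)
  rintro ⟨a, b⟩
  have ha := toNat_sub_neg_toNat a
  have hb := toNat_sub_neg_toNat b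
  push_cast
  nlinarith [ha, hb]

end GLPrimcodable
section Infra2
open GLPrimcodable

namespace GLPrimcodable

abbrev F44 : Type := Fin 4 → Fin 4 → ℤ

instance matPrimcodable : Primcodable (Matrix (Fin 4) (Fin 4) ℤ) :=
  Primcodable.ofEquiv F44 Matrix.of.symm

/-- Matrix multiplication written out entrywise on `Fin 4 → Fin 4 → ℤ`. -/
def mulF (p : F44 × F44) : F44 := fun i j =>
  p.1 i 0 * p.2 0 j + (p.1 i 1 * p.2 1 j + (p.1 i 2 * p.2 2 j + p.1 i 3 * p.2 3 j))

theorem primrec_mulF : Primrec mulF := by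
  rw [Primrec.fin_curry]
  refine Primrec₂.mk ?_
  rw [Primrec.fin_curry]
  refine Primrec₂.mk ?_
  -- p : ((F44 × F44) × Fin 4) × Fin 4
  have hA : Primrec (fun p : ((F44 × F44) × Fin 4) × Fin 4 => p.1.1.1) :=
    Primrec.fst.comp (Primrec.fst.comp Primrec.fst)
  have hB : Primrec (fun p : ((F44 × F44) × Fin 4) × Fin 4 => p.1.1.2) :=
    Primrec.snd.comp (Primrec.fst.comp Primrec.fst)
  have hi : Primrec (fun p : ((F44 × F44) × Fin 4) × Fin 4 => p.1.2) :=
    Primrec.snd.comp Primrec.fst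
  have hj : Primrec (fun p : ((F44 × F44) × Fin 4) × Fin 4 => p.2) := Primrec.snd
  have hAik : ∀ k : Fin 4, Primrec (fun p : ((F44 × F44) × Fin 4) × Fin 4 => p.1.1.1 p.1.2 k) :=
    fun k => Primrec.fin_app.comp (Primrec.fin_app.comp hA hi) (Primrec.const k)
  have hBkj : ∀ k : Fin 4, Primrec (fun p : ((F44 × F44) × Fin 4) × Fin 4 => p.1.1.2 k p.2) :=
    fun k => Primrec.fin_app.comp (Primrec.fin_app.comp hB (Primrec.const k)) hj
  exact primrec_int_add.comp (primrec_int_mul.comp (hAik 0) (hBkj 0))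
    (primrec_int_add.comp (primrec_int_mul.comp (hAik 1) (hBkj 1))
      (primrec_int_add.comp (primrec_int_mul.comp (hAik 2) (hBkj 2))
        (primrec_int_mul.comp (hAik 3) (hBkj 3))))

theorem primrec_matMul :
    Primrec (fun p : Matrix (Fin 4) (Fin 4) ℤ × Matrix (Fin 4) (Fin 4) ℤ => p.1 * p.2) := by
  rw [← Primrec.of_equiv_iff (Matrix.of.symm : Matrix (Fin 4) (Fin 4) ℤ ≃ F44)]
  have h : Primrec (fun p : Matrix (Fin 4) (Fin 4) ℤ × Matrix (Fin 4) (Fin 4) ℤ =>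
      mulF (Matrix.of.symm p.1, Matrix.of.symm p.2)) :=
    primrec_mulF.comp (Primrec.pair (Primrec.of_equiv.comp Primrec.fst)
      (Primrec.of_equiv.comp Primrec.snd))
  refine h.of_eq ?_
  rintro ⟨A, B⟩
  funext i j
  show mulF (A, B) i j = (A * B) i j
  rw [Matrix.mul_apply, Fin.sum_univ_four, mulF]
  ring

theorem primrecPred_isUnitPair :
    PrimrecPred (fun p : Matrix (Fin 4) (Fin 4) ℤ × Matrix (Fin 4) (Fin 4) ℤ =>
      p.1 * p.2 = 1 ∧ p.2 * p.1 = 1) := by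
  have h1 : PrimrecPred (fun p : Matrix (Fin 4) (Fin 4) ℤ × Matrix (Fin 4) (Fin 4) ℤ =>
      p.1 * p.2 = 1) :=
    PrimrecRel.comp Primrec.eq primrec_matMul (Primrec.const 1)
  have h2 : PrimrecPred (fun p : Matrix (Fin 4) (Fin 4) ℤ × Matrix (Fin 4) (Fin 4) ℤ =>
      p.2 * p.1 = 1) :=
    PrimrecRel.comp Primrec.eq
      (primrec_matMul.comp (Primrec.pair Primrec.snd Primrec.fst)) (Primrec.const 1)
  exact h1.and h2

instance glPrimcodable : Primcodable (Matrix.GeneralLinearGroup (Fin 4) ℤ) :=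
  letI : Primcodable {p : Matrix (Fin 4) (Fin 4) ℤ × Matrix (Fin 4) (Fin 4) ℤ //
      p.1 * p.2 = 1 ∧ p.2 * p.1 = 1} := Primcodable.subtype primrecPred_isUnitPair
  Primcodable.ofEquiv _ (unitsEquivProdSubtype (Matrix (Fin 4) (Fin 4) ℤ))

end GLPrimcodable
end Infra2

namespace GLPrimcodable

/-- The group automorphism of `ℤ⁴` (written multiplicatively) determined by an element of
`GL(4,ℤ)` acting `ℤ`-linearly on `ℤ⁴ = Fin 4 → ℤ`. -/
def glAut (g : Matrix.GeneralLinearGroup (Fin 4) ℤ) :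
    MulAut (Multiplicative (Fin 4 → ℤ)) :=
  AddEquiv.toMultiplicative
    ((LinearMap.GeneralLinearGroup.generalLinearEquiv ℤ (Fin 4 → ℤ)
      (Matrix.GeneralLinearGroup.toLin g)).toAddEquiv)

/-- The action of `FreeGroup (Fin 15)` on `ℤ⁴` sending the `i`-th generator to the
automorphism of `ℤ⁴` given by the matrix `f i`. -/
def phiOf (f : Fin 15 → Matrix.GeneralLinearGroup (Fin 4) ℤ) :
    FreeGroup (Fin 15) →* MulAut (Multiplicative (Fin 4 → ℤ)) :=
  FreeGroup.lift (fun i => glAut (f i))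

end GLPrimcodable

namespace Z4F15

inductive St | E | K | J
deriving DecidableEq

abbrev Cfg := St × ℤ × ℤ

def bz (b : Bool) : ℤ := if b then 1 else 0

def pushCode (l : List Bool) (g : ℤ) : ℤ := l.foldr (fun b g => 2 * g + bz b) g

@[simp] theorem pushCode_nil (g : ℤ) : pushCode [] g = g := rfl
@[simp] theorem pushCode_cons (b : Bool) (l : List Bool) (g : ℤ) :
    pushCode (b :: l) g = 2 * pushCode l g + bz b := rfl
theorem pushCode_append (l l2 : List Bool) (g : ℤ) :
    pushCode (l ++ l2) g = pushCode l (pushCode l2 g) := by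
  simp [pushCode, List.foldr_append]

def step (Z : List Bool) : Cfg → Cfg
  | (St.E, a, g) =>
    if g % 4 = 0 then (St.E, 2 * a + 1, g / 4)
    else if g % 4 = 2 then (St.E, 2 * a, g / 4)
    else (St.K, a, pushCode Z (g / 2))
  | (St.K, a, g) => if a % 2 = 0 then (St.E, a / 2, g) else (St.J, a / 2, g)
  | (St.J, a, g) => if g % 2 = 0 then (St.J, a, g / 2) else (St.K, a, g / 2)

def hcfg : Cfg := (St.K, -1, -1)

/-- the configuration reaches the target -/
def Good (Z : List Bool) (c : Cfg) : Prop := ∃ n, (step Z)^[n] c = hcfg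

def RN (Z : List Bool) (n : ℕ) (c d : Cfg) : Prop := (step Z)^[n] c = d
def R0 (Z : List Bool) (c d : Cfg) : Prop := ∃ n, RN Z n c d
def R1 (Z : List Bool) (c d : Cfg) : Prop := ∃ n, RN Z (n+1) c d

variable {Z : List Bool}

theorem R0.refl (c : Cfg) : R0 Z c c := ⟨0, rfl⟩
theorem R0.trans {c d e : Cfg} (h : R0 Z c d) (k : R0 Z d e) : R0 Z c e := by
  obtain ⟨n, h⟩ := h; obtain ⟨m, k⟩ := k
  refine ⟨m + n, ?_⟩
  unfold RN at *
  rw [Function.iterate_add_apply, h, k]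
theorem R1.to0 {c d : Cfg} (h : R1 Z c d) : R0 Z c d := ⟨h.choose + 1, h.choose_spec⟩
theorem R1.trans0 {c d e : Cfg} (h : R1 Z c d) (k : R0 Z d e) : R1 Z c e := by
  obtain ⟨n, h⟩ := h; obtain ⟨m, k⟩ := k
  refine ⟨m + n, ?_⟩
  unfold RN at *
  rw [show m + n + 1 = m + (n+1) by ring, Function.iterate_add_apply, h, k]
theorem R0.trans1 {c d e : Cfg} (h : R0 Z c d) (k : R1 Z d e) : R1 Z c e := by
  obtain ⟨n, h⟩ := h; obtain ⟨m, k⟩ := k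
  refine ⟨m + n, ?_⟩
  unfold RN at *
  rw [show m + n + 1 = (m + 1) + n by ring, Function.iterate_add_apply, h, k]
theorem R1.one {c d : Cfg} (h : step Z c = d) : R1 Z c d := ⟨0, h⟩
theorem R0.one {c d : Cfg} (h : step Z c = d) : R0 Z c d := ⟨1, h⟩

theorem hcfg_period : (step Z)^[2] hcfg = hcfg := by
  simp [step, hcfg]

theorem hcfg_even (m : ℕ) : (step Z)^[2 * m] hcfg = hcfg := by
  induction m with
  | zero => rfl
  | succ k ih => rw [show 2 * (k+1) = 2 * k + 2 by ring, Function.iterate_add_apply, hcfg_period, ih]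

theorem good_step (c : Cfg) : Good Z (step Z c) ↔ Good Z c := by
  constructor
  · rintro ⟨n, h⟩; exact ⟨n + 1, by rw [Function.iterate_succ_apply]; exact h⟩
  · rintro ⟨n, h⟩
    cases n with
    | zero =>
      refine ⟨1, ?_⟩
      have : c = hcfg := h
      subst this
      exact hcfg_period
    | succ n => exact ⟨n, by rw [Function.iterate_succ_apply] at h; exact h⟩

theorem good_R0 {c d : Cfg} (h : R0 Z c d) : Good Z c ↔ Good Z d := by
  obtain ⟨n, h⟩ := h
  unfold RN at h
  subst h
  induction n generalizing c with
  | zero => rfl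
  | succ n ih => rw [Function.iterate_succ_apply, ← ih, good_step]

/-- push `n` ones -/
def xp (n : ℕ) (a : ℤ) : ℤ := 2 ^ n * (a + 1) - 1
def tok (n : ℕ) (a : ℤ) : ℤ := xp n (2 * a)

@[simp] theorem xp_zero (a : ℤ) : xp 0 a = a := by simp [xp]
theorem xp_succ (n : ℕ) (a : ℤ) : xp (n+1) a = 2 * xp n a + 1 := by simp [xp, pow_succ]; ring
theorem xp_xp (n m : ℕ) (a : ℤ) : xp n (xp m a) = xp (n + m) a := by simp [xp, pow_add]; ring
theorem xp_tok (n m : ℕ) (a : ℤ) : xp n (tok m a) = tok (n + m) a := xp_xp _ _ _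
@[simp] theorem xp_neg_one (n : ℕ) : xp n (-1) = -1 := by simp [xp]

theorem tok_ne_neg_one (n : ℕ) (a : ℤ) : tok n a ≠ -1 := by
  unfold tok xp
  have : (2:ℤ)^n * (2 * a + 1) ≠ 0 := mul_ne_zero (by positivity) (by omega)
  omega

abbrev wX : List Bool := [false, false]
abbrev wY : List Bool := [false, true]
abbrev wS : List Bool := [true]
def wXn (n : ℕ) : List Bool := List.replicate (2 * n) false

theorem wXn_succ (n : ℕ) : wXn (n+1) = wX ++ wXn n := by
  simp [wXn, show 2 * (n+1) = 2 * n + 1 + 1 by ring, List.replicate_succ]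

theorem run_X (a g : ℤ) : R0 Z (St.E, a, pushCode wX g) (St.E, 2 * a + 1, g) := by
  apply R0.one
  have h1 : (2 * (2 * g)) % 4 = 0 := by omega
  have h2 : (2 * (2 * g)) / 4 = g := by omega
  simp [step, bz, h1, h2]

theorem run_Y (a g : ℤ) : R0 Z (St.E, a, pushCode wY g) (St.E, 2 * a, g) := by
  apply R0.one
  have h1 : (2 * (2 * g + 1)) % 4 = 2 := by omega
  have h2 : (2 * (2 * g + 1)) / 4 = g := by omega
  simp [step, bz, h1, h2]

theorem run_S (a g : ℤ) : R1 Z (St.E, a, pushCode wS g) (St.K, a, pushCode Z g) := by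
  apply R1.one
  have h1 : (2 * g + 1) % 4 ≠ 2 := by omega
  have h0 : (2 * g + 1) % 4 ≠ 0 := by omega
  have h2 : (2 * g + 1) / 2 = g := by omega
  simp [step, bz, h1, h2, h0]

theorem run_Xn (n : ℕ) (a g : ℤ) : R0 Z (St.E, a, pushCode (wXn n) g) (St.E, xp n a, g) := by
  induction n generalizing a with
  | zero => simpa [wXn] using R0.refl _
  | succ n ih =>
    rw [wXn_succ, pushCode_append]
    have := (run_X (Z := Z) a (pushCode (wXn n) g)).trans (ih _)
    rw [show xp (n+1) a = xp n (2 * a + 1) by simp [xp, pow_succ]; ring]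
    exact this

def ones (w : List Bool) : ℕ := w.count true

@[simp] theorem ones_nil : ones [] = 0 := rfl
@[simp] theorem ones_true (l : List Bool) : ones (true :: l) = ones l + 1 := by simp [ones]
@[simp] theorem ones_false (l : List Bool) : ones (false :: l) = ones l := by simp [ones]
@[simp] theorem ones_append (u v : List Bool) : ones (u ++ v) = ones u + ones v := by
  simp [ones]
@[simp] theorem ones_wXn (n : ℕ) : ones (wXn n) = 0 := by simp [ones, wXn, List.count_replicate]

inductive Cl : List Bool → Prop
  | nil : Cl []
  | snoc (u : List Bool) : Cl (u ++ [true])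

theorem Cl.append {u v : List Bool} (hu : Cl u) (hv : Cl v) : Cl (u ++ v) := by
  cases hv with
  | nil => simpa using hu
  | snoc w => rw [← List.append_assoc]; exact .snoc _

theorem skip_J (u : List Bool) (a g : ℤ) :
    R0 Z (St.J, xp (ones u) a, pushCode (u ++ [true]) g) (St.K, a, g) := by
  induction u with
  | nil =>
    apply R0.one
    have h0 : (2 * g + 1) % 2 = 1 := by omega
    have h2 : (2 * g + 1) / 2 = g := by omega
    simp [step, bz, h0, h2]
  | cons b u ih =>
    cases b with
    | false =>
      refine R0.trans (R0.one ?_) ih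
      simp [step, bz, ones]
    | true =>
      have e : ones (true :: u) = ones u + 1 := by simp [ones]
      rw [e]
      refine R0.trans (d := (St.K, xp (ones u + 1) a, pushCode (u ++ [true]) g)) (R0.one ?_) (R0.trans (R0.one ?_) ih)
      · have h0 : (2 * pushCode (u ++ [true]) g + 1) % 2 = 1 := by omega
        have h2 : (2 * pushCode (u ++ [true]) g + 1) / 2 = pushCode (u ++ [true]) g := by omega
        simp only [List.cons_append, pushCode_cons (b := true) (l := u ++ [true]), bz, if_true, step, h0, h2]
        simp
      · have h0 : (2 * xp (ones u) a + 1) % 2 = 1 := by omega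
        have h2 : (2 * xp (ones u) a + 1) / 2 = xp (ones u) a := by omega
        rw [xp_succ]
        simp [step, h0, h2]

theorem skip_K {w : List Bool} (h : Cl w) (a g : ℤ) :
    R0 Z (St.K, xp (ones w) a, pushCode w g) (St.K, a, g) := by
  cases h with
  | nil => simpa using R0.refl _
  | snoc u =>
    refine R0.trans (R0.one ?_) (skip_J u a g)
    have e : ones (u ++ [true]) = ones u + 1 := by simp [ones]
    have h0 : (2 * xp (ones u) a + 1) % 2 = 1 := by omega
    have h2 : (2 * xp (ones u) a + 1) / 2 = xp (ones u) a := by omega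
    rw [e, xp_succ]
    simp [step, h0, h2]

theorem skip_tok {w : List Bool} (h : Cl w) (a g : ℤ) :
    R1 Z (St.K, tok (ones w) a, pushCode w g) (St.E, a, g) :=
  (skip_K h (2 * a) g).trans1 (R1.one (by simp [step]))

/-- falling off the left end -/
theorem eat (w : List Bool) : R0 Z (St.K, -1, pushCode w (-1)) hcfg := by
  have := skip_K (Z := Z) (Cl.snoc w) (-1) (-1)
  rw [xp_neg_one, pushCode_append] at this
  simpa [bz, hcfg] using this

/-- `Y X^m S` -/
def wjump (m : ℕ) : List Bool := wY ++ wXn m ++ wS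

theorem run_jump (d : List Bool) (hZ : Cl Z) (hd : Cl d) (a g : ℤ) :
    R0 Z (St.E, a, pushCode (wjump (ones Z + ones d) ++ d) g) (St.E, a, g) := by
  unfold wjump
  rw [pushCode_append, pushCode_append, pushCode_append]
  refine (run_Y _ _).trans ((run_Xn _ _ _).trans ((run_S _ _).to0.trans ?_))
  rw [← pushCode_append]
  have := skip_tok (Z := Z) (hZ.append hd) a g
  rw [ones_append] at this
  exact this.to0

/-- instructions -/
inductive Ins
  | R (h b : ℕ) | L (b h : ℕ) | G (n : ℕ) | P (h n : ℕ)

/-- ones of the complete program with `N` entries -/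
abbrev oZ (N : ℕ) : ℕ := 4 * N + 1

/-- entry, `N` total number of entries, `r` number of entries after this one.
Last piece of an `L` entry -/
def wrestL (N r h : ℕ) : List Bool := wXn h ++ wjump (oZ N + (4 * r + 1)) ++ wY

def went (N r : ℕ) : Ins → List Bool
  | .R h b => wY ++ wXn h ++ (wY ++ wXn b) ++ wjump (oZ N + (4 * r + 1))
  | .L b h => wXn b ++ wS ++ wrestL N r h
  | .G n => wY ++ wXn n ++ wjump (oZ N + (4 * r + 1)) ++ wY
  | .P h n => wY ++ wXn h ++ (wY ++ wXn n) ++ wjump (oZ N + 4 * r)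

theorem ones_went (N r : ℕ) (i : Ins) : ones (went N r i) = 4 := by
  cases i <;> simp [went, wjump, wrestL]

theorem cl_went (N r : ℕ) (i : Ins) : Cl (went N r i) := by
  have e : wY = [false] ++ [true] := rfl
  cases i with
  | R h b => simp only [went, wjump]; simp only [← List.append_assoc]; exact .snoc _
  | L b h =>
    simp only [went, wjump, wrestL]; simp only [← List.append_assoc];
    rw [e, ← List.append_assoc]; exact .snoc _
  | G n => simp only [went, wjump]; rw [e, ← List.append_assoc _ [false]]; exact .snoc _
  | P h n => simp only [went, wjump]; simp only [← List.append_assoc]; exact .snoc _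

/-- code of the entries with index in `[i, i+r)`, where `i + r = N` -/
def wprog (N : ℕ) (I : ℕ → Ins) : ℕ → ℕ → List Bool
  | _, 0 => []
  | i, r+1 => went N r (I i) ++ wprog N I (i+1) r

theorem ones_wprog (N : ℕ) (I : ℕ → Ins) (i r : ℕ) : ones (wprog N I i r) = 4 * r := by
  induction r generalizing i with
  | zero => rfl
  | succ r ih => simp [wprog, ih, ones_went]; ring

theorem cl_wprog (N : ℕ) (I : ℕ → Ins) (i r : ℕ) : Cl (wprog N I i r) := by
  induction r generalizing i with
  | zero => exact .nil
  | succ r ih => exact (cl_went _ _ _).append (ih _)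

def prog (N : ℕ) (I : ℕ → Ins) : List Bool := wprog N I 0 N ++ wS

theorem ones_prog (N : ℕ) (I : ℕ → Ins) : ones (prog N I) = oZ N := by
  simp [prog, ones_wprog, oZ]
theorem cl_prog (N : ℕ) (I : ℕ → Ins) : Cl (prog N I) := .snoc _

theorem dispatch_aux (N : ℕ) (I : ℕ → Ins) (j k r : ℕ) (a g : ℤ) :
    R1 Z (St.K, tok (4 * k) a, pushCode (wprog N I j (k + (r+1)) ++ wS) g)
      (St.E, a, pushCode (went N r (I (j+k)) ++ (wprog N I (j+k+1) r ++ wS)) g) := by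
  induction k generalizing j with
  | zero =>
    rw [show 0 + (r+1) = r + 1 by ring]
    refine R1.one ?_
    simp [step, tok, wprog]
  | succ k ih =>
    have := ih (j+1)
    rw [show k + 1 + (r+1) = (k + (r+1)) + 1 by ring, wprog, List.append_assoc, pushCode_append]
    rw [show tok (4 * (k+1)) a = xp 4 (tok (4 * k) a) by rw [xp_tok]; ring_nf]
    have h2 := skip_K (Z := Z) (cl_went N (k + (r+1)) (I j)) (tok (4 * k) a)
      (pushCode (wprog N I (j+1) (k + (r+1)) ++ wS) g)
    rw [ones_went] at h2
    have := h2.trans1 this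
    rw [show j + 1 + k = j + (k+1) by ring] at this
    exact this

theorem dispatch (N : ℕ) (I : ℕ → Ins) (i r : ℕ) (hi : i + (r+1) = N) (a g : ℤ) :
    R1 (prog N I) (St.K, tok (4 * i) a, pushCode (prog N I) g)
      (St.E, a, pushCode (went N r (I i) ++ (wprog N I (i+1) r ++ wS)) g) := by
  subst hi
  have := dispatch_aux (Z := prog (i + (r+1)) I) (i + (r+1)) I 0 i r a g
  simpa [prog] using this

section
variable (N : ℕ) (I : ℕ → Ins)

theorem run_tail (d : List Bool) (r : ℕ) (hd : Cl d) (hr : ones d = r) (a g : ℤ) :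
    R0 (prog N I) (St.E, a, pushCode (wjump (oZ N + r) ++ (d ++ wS)) g)
      (St.K, a, pushCode (prog N I) g) := by
  rw [← List.append_assoc, pushCode_append, ← hr, ← ones_prog N I]
  exact (run_jump d (cl_prog N I) hd _ _).trans (run_S _ _).to0

/-- what is left of an `L h` entry -/
def wframe (i h : ℕ) : List Bool :=
  wrestL N (N - i - 1) h ++ (wprog N I (i+1) (N - i - 1) ++ wS)

theorem cl_wY : Cl wY := .snoc [false]

theorem do_frame (i h n : ℕ) (a g : ℤ) :
    R0 (prog N I) (St.E, tok n a, pushCode (wframe N I i h) g)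
      (St.K, tok (h + n) a, pushCode (prog N I) g) := by
  unfold wframe wrestL
  rw [List.append_assoc, List.append_assoc, pushCode_append]
  refine (run_Xn _ _ _).trans ?_
  rw [xp_tok, ← List.append_assoc wY]
  exact run_tail N I _ _ (cl_wY.append (cl_wprog _ _ _ _))
    (by simp [ones_wprog]) _ _

theorem do_L (i b h : ℕ) (hi : i < N) (hI : I i = .L b h) (a g : ℤ) :
    R1 (prog N I) (St.K, tok (4 * i) a, pushCode (prog N I) g)
      (St.K, xp b a, pushCode (prog N I) (pushCode (wframe N I i h) g)) := by
  refine (dispatch N I i (N - i - 1) (by omega) a g).trans0 ?_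
  rw [hI]
  simp only [went]
  rw [List.append_assoc, List.append_assoc, pushCode_append, pushCode_append]
  exact (run_Xn _ _ _).trans (run_S _ _).to0

theorem do_R (i h b : ℕ) (hi : i < N) (hI : I i = .R h b) (a g : ℤ) :
    R1 (prog N I) (St.K, tok (4 * i) a, pushCode (prog N I) g)
      (St.E, tok b (tok h a), g) := by
  refine (dispatch N I i (N - i - 1) (by omega) a g).trans0 ?_
  rw [hI]
  simp only [went]
  rw [List.append_assoc, List.append_assoc, List.append_assoc, pushCode_append, pushCode_append,
    List.append_assoc, pushCode_append, pushCode_append]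
  refine (run_Y _ _).trans ((run_Xn _ _ _).trans ((run_Y _ _).trans ((run_Xn _ _ _).trans ?_)))
  have e : oZ N + (4 * (N - i - 1) + 1) = ones (prog N I) +
      ones (wprog N I (i+1) (N - i - 1) ++ wS) := by
    simp [ones_prog, ones_wprog]
  rw [e]
  exact run_jump _ (cl_prog _ _) (.snoc _) _ _

theorem do_G (i n : ℕ) (hi : i < N) (hI : I i = .G n) (a g : ℤ) :
    R1 (prog N I) (St.K, tok (4 * i) a, pushCode (prog N I) g)
      (St.K, tok n a, pushCode (prog N I) g) := by
  refine (dispatch N I i (N - i - 1) (by omega) a g).trans0 ?_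
  rw [hI]
  simp only [went]
  rw [List.append_assoc, List.append_assoc, List.append_assoc, pushCode_append, pushCode_append]
  refine (run_Y _ _).trans ((run_Xn _ _ _).trans ?_)
  rw [← List.append_assoc wY]
  exact run_tail N I _ _ (cl_wY.append (cl_wprog _ _ _ _))
    (by simp [ones_wprog]) _ _

theorem do_P (i h n : ℕ) (hi : i < N) (hI : I i = .P h n) (a g : ℤ) :
    R1 (prog N I) (St.K, tok (4 * i) a, pushCode (prog N I) g)
      (St.K, tok n (tok h a), pushCode (prog N I) g) := by
  refine (dispatch N I i (N - i - 1) (by omega) a g).trans0 ?_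
  rw [hI]
  simp only [went]
  rw [List.append_assoc, List.append_assoc, List.append_assoc, pushCode_append, pushCode_append,
    List.append_assoc, pushCode_append, pushCode_append]
  refine (run_Y _ _).trans ((run_Xn _ _ _).trans ((run_Y _ _).trans ((run_Xn _ _ _).trans ?_)))
  exact run_tail N I _ _ (cl_wprog _ _ _ _) (by simp [ones_wprog]) _ _
end
end Z4F15

set_option linter.unusedSectionVars false
namespace Z4F15
open Turing

section sim
variable {Γ Λ : Type} [Inhabited Γ] [Inhabited Λ] (M : TM0.Machine Γ Λ)
  (m s : ℕ) (sy : Γ → ℕ) (syi : ℕ → Γ) (ix : Λ → ℕ) (ixi : ℕ → Λ)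

def insQ (q h : ℕ) : Ins :=
  if q = 0 then (if h = m then .R (4 * m) (4 * ((m+1) * (ix default + 2))) else .L 0 (4 * h))
  else if q = 1 then .L (4 * (m+1)) (4 * h)
  else if h = m then .P (4 * m) (4 * ((m+1) * q))
  else match M (ixi (q - 2)) (syi h) with
    | none => .L (4 * (m+1)) (4 * h)
    | some (q', TM0.Stmt.move Dir.left) => .L (4 * ((m+1) * (ix q' + 2))) (4 * h)
    | some (q', TM0.Stmt.move Dir.right) => .R (4 * h) (4 * ((m+1) * (ix q' + 2)))
    | some (q', TM0.Stmt.write x) => .G (4 * ((m+1) * (ix q' + 2) + sy x))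

def insI (i : ℕ) : Ins := insQ M m sy syi ix ixi (i / (m+1)) (i % (m+1))
def NN : ℕ := (m+1) * (s+2)

def theZ : List Bool := prog (NN m s) (insI M m sy syi ix ixi)

def encL (l : List Γ) : ℤ := l.foldr (fun x a => tok (4 * sy x) a) (tok (4 * m) (-1))

inductive RS : List Γ → ℤ → Prop
  | nil : RS [] (-1)
  | cons (x : Γ) (l : List Γ) (g : ℤ) (i : ℕ) : RS l g → RS (x :: l)
      (pushCode (wframe (NN m s) (insI M m sy syi ix ixi) i (4 * sy x)) g)

def at' (q h : ℕ) (a g : ℤ) : Cfg :=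
  (St.K, tok (4 * ((m+1) * q + h)) a, pushCode (theZ M m s sy syi ix ixi) g)

variable {M m s sy syi ix ixi}

theorem RS.exW {l : List Γ} {g : ℤ} (h : RS M m s sy syi ix ixi l g) :
    ∃ w, g = pushCode w (-1) := by
  induction h with
  | nil => exact ⟨[], rfl⟩
  | cons x l g i _ ih =>
    obtain ⟨w, rfl⟩ := ih
    exact ⟨_, (pushCode_append _ _ _).symm⟩

theorem idx_lt {q h : ℕ} (hq : q < s + 2) (hh : h ≤ m) : (m+1) * q + h < NN m s := by
  unfold NN; nlinarith
theorem insI_eq {q h : ℕ} (hh : h ≤ m) :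
    insI M m sy syi ix ixi ((m+1) * q + h) = insQ M m sy syi ix ixi q h := by
  unfold insI
  rw [Nat.mul_add_div (by omega), Nat.mul_add_mod, Nat.div_eq_of_lt (by omega),
    Nat.mod_eq_of_lt (by omega), Nat.add_zero]

variable (hsy : ∀ x, syi (sy x) = x) (hsm : ∀ x, sy x < m) (hs0 : sy default = 0)

include hs0 in
theorem popRight {rs : List Γ} {g : ℤ} (h : RS M m s sy syi ix ixi rs g) (q : ℕ) (a : ℤ) :
    ∃ g', RS M m s sy syi ix ixi rs.tail g' ∧
      R0 (theZ M m s sy syi ix ixi) (St.E, tok (4 * ((m+1) * q)) a, g)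
        (at' M m s sy syi ix ixi q (sy rs.headI) a g') := by
  cases h with
  | nil =>
    refine ⟨-1, .nil, ?_⟩
    have := run_S (Z := theZ M m s sy syi ix ixi) (tok (4 * ((m+1) * q)) a) (-1)
    rw [show List.headI ([] : List Γ) = default from rfl, hs0]
    exact this.to0
  | cons x l g i h =>
    refine ⟨g, h, ?_⟩
    have := do_frame (NN m s) (insI M m sy syi ix ixi) i (4 * sy x) (4 * ((m+1) * q)) a g
    rw [show 4 * sy x + 4 * ((m+1) * q) = 4 * ((m+1)*q + sy x) by ring] at this
    exact this

include hsm in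
theorem hlt_good (ls : List Γ) (w : List Bool) : Good (theZ M m s sy syi ix ixi)
    (St.K, xp (4 * (m+1)) (encL m sy ls), pushCode (theZ M m s sy syi ix ixi) (pushCode w (-1))) := by
  induction ls generalizing w with
  | nil =>
    have := do_L (NN m s) (insI M m sy syi ix ixi) ((m+1) * 1 + m) (4 * (m+1)) (4 * m)
      (idx_lt (by omega) le_rfl) (by rw [insI_eq le_rfl]; simp [insQ]) (-1) (pushCode w (-1))
    simp only [encL, List.foldr_nil, xp_tok]
    rw [show 4 * ((m+1) * 1 + m) = 4 * (m+1) + 4 * m by ring] at this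
    refine (good_R0 (show R0 (theZ M m s sy syi ix ixi) _ _ from this.to0)).2 ?_
    rw [xp_neg_one, ← pushCode_append, ← pushCode_append]
    obtain ⟨n, hn⟩ := eat (Z := theZ M m s sy syi ix ixi) (prog (NN m s) (insI M m sy syi ix ixi) ++
      wframe (NN m s) (insI M m sy syi ix ixi) ((m + 1) * 1 + m) (4 * m) ++ w)
    exact ⟨n, hn⟩
  | cons x ls ih =>
    have := do_L (NN m s) (insI M m sy syi ix ixi) ((m+1) * 1 + sy x) (4 * (m+1)) (4 * sy x)
      (idx_lt (by omega) (hsm x).le) (by rw [insI_eq (hsm x).le]; simp [insQ])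
      (encL m sy ls) (pushCode w (-1))
    rw [show 4 * ((m+1) * 1 + sy x) = 4 * (m+1) + 4 * sy x by ring] at this
    simp only [encL, List.foldr_cons, xp_tok]
    refine (good_R0 (show R0 (theZ M m s sy syi ix ixi) _ _ from this.to0)).2 ?_
    rw [← pushCode_append (wframe _ _ _ _)]
    exact ih _

variable (M m s sy syi ix ixi) in
def Sim (S : Set Λ) (c : TM0.Cfg Γ Λ) (d : Cfg) : Prop :=
  c.q ∈ S ∧ ∃ ls rs g, RS M m s sy syi ix ixi rs g ∧ c.Tape.left = ListBlank.mk ls ∧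
    c.Tape.right = ListBlank.mk rs ∧
    d = at' M m s sy syi ix ixi (ix c.q + 2) (sy c.Tape.head) (encL m sy ls) g

variable {S : Set Λ} (hix : ∀ q ∈ S, ixi (ix q) = q) (his : ∀ q ∈ S, ix q < s)
  (hS : TM0.Supports M S)

include hsm in
theorem sim_ins {q : Λ} {x : Γ} : insI M m sy syi ix ixi ((m+1) * (ix q + 2) + sy x) =
    match M (ixi (ix q)) (syi (sy x)) with
    | none => .L (4 * (m+1)) (4 * sy x)
    | some (q', TM0.Stmt.move Dir.left) => .L (4 * ((m+1) * (ix q' + 2))) (4 * sy x)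
    | some (q', TM0.Stmt.move Dir.right) => .R (4 * sy x) (4 * ((m+1) * (ix q' + 2)))
    | some (q', TM0.Stmt.write y) => .G (4 * ((m+1) * (ix q' + 2) + sy y)) := by
  have h1 := hsm x
  rw [insI_eq h1.le, insQ, if_neg (by omega), if_neg (by omega), if_neg (by omega)]
  rfl

include hsy hsm hix his in
theorem sim_halt {c : TM0.Cfg Γ Λ} {d : Cfg} (h : Sim M m s sy syi ix ixi S c d)
    (hc : TM0.step M c = none) : Good (theZ M m s sy syi ix ixi) d := by
  obtain ⟨q, T⟩ := c
  obtain ⟨hq, ls, rs, g, hg, hl, hr, rfl⟩ := h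
  dsimp only at *
  have hM : M q T.head = none := by simpa [TM0.step] using hc
  obtain ⟨w, rfl⟩ := hg.exW
  have hI : insI M m sy syi ix ixi ((m+1) * (ix q + 2) + sy T.head) = .L (4 * (m+1)) (4 * sy T.head) := by
    rw [sim_ins hsm, hix q hq, hsy, hM]
  have hq' := his q hq
  have := do_L (NN m s) (insI M m sy syi ix ixi) _ (4 * (m+1)) (4 * sy T.head)
      (idx_lt (by omega) (hsm _).le) hI (encL m sy ls) (pushCode w (-1))
  unfold at'
  refine (good_R0 (show R0 (theZ M m s sy syi ix ixi) _ _ from this.to0)).2 ?_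
  rw [← pushCode_append (wframe _ _ _ _)]
  exact hlt_good hsm ls _

include hsy hsm hs0 hix his hS in
theorem sim_step {c c' : TM0.Cfg Γ Λ} {d : Cfg} (h : Sim M m s sy syi ix ixi S c d)
    (hc : TM0.step M c = some c') :
    ∃ d', R1 (theZ M m s sy syi ix ixi) d d' ∧ Sim M m s sy syi ix ixi S c' d' := by
  have hS' := TM0.step_supports M hS hc h.1
  obtain ⟨q, T⟩ := c
  obtain ⟨hq, ls, rs, g, hg, hl, hr, rfl⟩ := h
  dsimp only at *
  simp only [TM0.step, Option.map_eq_some_iff] at hc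
  obtain ⟨⟨q', st⟩, hM, rfl⟩ := hc
  dsimp only at *
  have hI := sim_ins (M := M) (sy := sy) (syi := syi) (ix := ix) (ixi := ixi) hsm (q := q) (x := T.head)
  rw [hix q hq, hsy, hM] at hI
  have hq' := his q hq
  have hq2 := his q' hS'
  have hlt : (m+1) * (ix q + 2) + sy T.head < NN m s := idx_lt (by omega) (hsm _).le
  cases st with
  | write y =>
    refine ⟨_, do_G _ _ _ _ hlt hI _ _, hS', ls, rs, g, hg, hl, hr, rfl⟩
  | move dir =>
    cases dir with
    | left =>
      have h1 := do_L _ _ _ _ _ hlt hI (encL m sy ls) g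
      have hg' := RS.cons T.head rs g ((m+1) * (ix q + 2) + sy T.head) hg
      cases ls with
      | cons y ls =>
        simp only [encL, List.foldr_cons, xp_tok] at h1
        rw [← Nat.mul_add] at h1
        refine ⟨_, h1, hS', ls, _, _, hg', ?_, ?_, ?_⟩
        · simp [Tape.move, hl]
        · simp [Tape.move, hr]
        · simp [Tape.move, hl, at', encL]; rfl
      | nil =>
        simp only [encL, List.foldr_nil, xp_tok] at h1
        rw [← Nat.mul_add] at h1
        have h2 := do_P (NN m s) (insI M m sy syi ix ixi) ((m+1) * (ix q' + 2) + m) (4 * m)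
          (4 * ((m+1) * (ix q' + 2))) (idx_lt (by omega) le_rfl)
          (by rw [insI_eq le_rfl, insQ, if_neg (by omega), if_neg (by omega), if_pos rfl])
          (-1) (pushCode (wframe (NN m s) (insI M m sy syi ix ixi) ((m + 1) * (ix q + 2) + sy T.head) (4 * sy T.head)) g)
        refine ⟨_, h1.trans0 h2.to0, hS', [], _, _, hg', ?_, ?_, ?_⟩
        · simp [Tape.move, hl]
        · simp [Tape.move, hr]
        · have : (ListBlank.mk ([] : List Γ)).head = default := rfl
          simp [Tape.move, hl, at', encL, hs0, this]; rfl
    | right =>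
      have h1 := do_R _ _ _ _ _ hlt hI (encL m sy ls) g
      obtain ⟨g', hg', h2⟩ := popRight hs0 hg (ix q' + 2) (tok (4 * sy T.head) (encL m sy ls))
      refine ⟨_, h1.trans0 h2, hS', T.head :: ls, _, _, hg', ?_, ?_, ?_⟩
      · simp [Tape.move, hl]
      · simp [Tape.move, hr]
      · simp [Tape.move, hr, encL]

theorem iter_hcfg (Z : List Bool) (n : ℕ) : ((step Z)^[n] hcfg).2.1 = -1 := by
  rcases Nat.even_or_odd' n with ⟨k, rfl | rfl⟩
  · rw [hcfg_even]; rfl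
  · rw [Nat.add_comm, Function.iterate_add_apply, hcfg_even]; rfl

include hsy hsm hs0 hix his hS in
theorem sim_dom (n : ℕ) {c : TM0.Cfg Γ Λ} {d : Cfg} (h : Sim M m s sy syi ix ixi S c d)
    (hd : RN (theZ M m s sy syi ix ixi) n d hcfg) : (StateTransition.eval (TM0.step M) c).Dom := by
  induction n using Nat.strong_induction_on generalizing c d with
  | _ n ih =>
    cases hc : TM0.step M c with
    | none =>
      rw [Part.dom_iff_mem]
      exact ⟨c, StateTransition.mem_eval.2 ⟨Relation.ReflTransGen.refl, hc⟩⟩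
    | some c' =>
      obtain ⟨d', ⟨k, hk⟩, h'⟩ := sim_step hsy hsm hs0 hix his hS h hc
      rw [StateTransition.reaches_eval (b := c') (Relation.ReflTransGen.single hc)]
      by_cases hn : k + 1 ≤ n
      · refine ih (n - (k+1)) (by omega) h' ?_
        unfold RN at *
        rw [← hk, ← Function.iterate_add_apply, Nat.sub_add_cancel hn, hd]
      · exfalso
        unfold RN at *
        have e : (step (theZ M m s sy syi ix ixi))^[k+1-n] hcfg = d' := by
          rw [← hk, ← hd, ← Function.iterate_add_apply, Nat.sub_add_cancel (by omega)]
        have h3 := iter_hcfg (theZ M m s sy syi ix ixi) (k+1-n)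
        rw [e] at h3
        obtain ⟨_, ls, rs, g, _, _, _, rfl⟩ := h'
        exact tok_ne_neg_one _ _ h3

include hsy hsm hs0 hix his hS in
theorem sim_good {c : TM0.Cfg Γ Λ} {d : Cfg} (h : Sim M m s sy syi ix ixi S c d) :
    Good (theZ M m s sy syi ix ixi) d ↔ (StateTransition.eval (TM0.step M) c).Dom := by
  constructor
  · rintro ⟨n, hn⟩
    exact sim_dom hsy hsm hs0 hix his hS n h hn
  · rw [Part.dom_iff_mem]
    rintro ⟨b, hb⟩
    revert d
    refine StateTransition.evalInduction (C := fun c => ∀ {d}, Sim M m s sy syi ix ixi S c d →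
      Good (theZ M m s sy syi ix ixi) d) hb ?_
    · intro c hc ih d h
      cases e : TM0.step M c with
      | none => exact sim_halt hsy hsm hix his h e
      | some c' =>
        obtain ⟨d', hd, h'⟩ := sim_step hsy hsm hs0 hix his hS h e
        rw [good_R0 hd.to0]
        exact ih c' e h'

include hsm hs0 hS in
theorem rew_run (ls rs : List Γ) (g : ℤ) (hg : RS M m s sy syi ix ixi rs g) :
    ∃ d, R0 (theZ M m s sy syi ix ixi)
      (St.K, encL m sy ls, pushCode (theZ M m s sy syi ix ixi) g) d ∧
      Sim M m s sy syi ix ixi S ⟨default, Tape.mk₁ (ls.reverse ++ rs)⟩ d := by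
  induction ls generalizing rs g with
  | nil =>
    have h1 := do_R (NN m s) (insI M m sy syi ix ixi) ((m+1) * 0 + m) (4 * m) (4 * ((m+1) * (ix default + 2)))
      (idx_lt (by omega) le_rfl) (by rw [insI_eq le_rfl]; simp [insQ]) (-1) g
    obtain ⟨g', hg', h2⟩ := popRight hs0 hg (ix default + 2) (tok (4 * m) (-1))
    rw [show 4 * ((m+1) * 0 + m) = 4 * m by ring] at h1
    refine ⟨_, h1.to0.trans h2, hS.1, [], _, _, hg', ?_, ?_, ?_⟩
    · rfl
    · simp [Tape.mk₁, Tape.mk₂]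
    · simp [Tape.mk₁, Tape.mk₂, encL]
  | cons x ls ih =>
    have h1 := do_L (NN m s) (insI M m sy syi ix ixi) ((m+1) * 0 + sy x) 0 (4 * sy x)
      (idx_lt (by omega) (hsm x).le)
      (by have := hsm x; rw [insI_eq this.le, insQ, if_pos rfl, if_neg (by omega)]) (encL m sy ls) g
    rw [show 4 * ((m+1) * 0 + sy x) = 4 * sy x by ring, xp_zero] at h1
    obtain ⟨d, hd, hs⟩ := ih _ _ (RS.cons x rs g _ hg)
    refine ⟨d, h1.to0.trans hd, ?_⟩
    simpa using hs

include hsy hsm hs0 hix his hS in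
theorem start_good (l : List Γ) : Good (theZ M m s sy syi ix ixi) (St.E, encL m sy l.reverse, -1) ↔
    (TM0.eval M l).Dom := by
  obtain ⟨d, hd, hs⟩ := rew_run hsm hs0 hS l.reverse [] (-1) (RS.nil (M := M) (s := s) (syi := syi) (ix := ix) (ixi := ixi))
  have h0 := (run_S (Z := theZ M m s sy syi ix ixi) (encL m sy l.reverse) (-1)).to0
  rw [show pushCode wS (-1) = -1 by simp [bz]] at h0
  rw [good_R0 (h0.trans hd), sim_good hsy hsm hs0 hix his hS hs]
  simp [TM0.eval, TM0.init]
end sim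

end Z4F15

namespace Z4F15
open Turing

theorem exists_theZ {Γ Λ : Type} [Inhabited Γ] [Inhabited Λ] [Finite Γ] (M : TM0.Machine Γ Λ)
    (S : Finset Λ) (hS : TM0.Supports M (S : Set Λ)) :
    ∃ (Z : List Bool) (m : ℕ) (sy : Γ → ℕ), Cl Z ∧ Z ≠ [] ∧ ∀ l : List Γ,
      Good Z (St.E, encL m sy l.reverse, -1) ↔ (TM0.eval M l).Dom := by
  classical
  obtain ⟨k, ⟨e⟩⟩ := Finite.exists_equiv_fin Γ
  let sy : Γ → ℕ := fun x => if x = default then 0 else (e x : ℕ) + 1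
  have hinj : Function.Injective sy := by
    intro x y h
    simp only [sy] at h
    split_ifs at h with h1 h2 h2
    · rw [h1, h2]
    · exact e.injective (Fin.ext (by omega))
  let ix : Λ → ℕ := fun q => if h : q ∈ S then (S.equivFin ⟨q, h⟩ : ℕ) else 0
  have hix : Set.InjOn ix (S : Set Λ) := by
    intro p hp q hq h
    have hp' : p ∈ S := hp
    have hq' : q ∈ S := hq
    simp only [ix, dif_pos hp', dif_pos hq'] at h
    have := S.equivFin.injective (Fin.ext h)
    simpa using this
  refine ⟨theZ M (k+1) S.card sy (Function.invFun sy) ix (Function.invFunOn ix (S : Set Λ)), k+1, sy,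
    cl_prog _ _, by simp [theZ, prog], fun l => ?_⟩
  refine start_good (Function.leftInverse_invFun hinj) ?_ (by simp [sy])
    (fun q hq => hix.leftInvOn_invFunOn hq) ?_ hS l
  · intro x
    simp only [sy]
    split_ifs
    · omega
    · have := (e x).2; omega
  · intro q hq
    have hq' : q ∈ S := hq
    simp only [ix, dif_pos hq']
    exact (S.equivFin _).2

/-- numerical encoding of inputs -/
def encN (base : ℤ) (b0 b1 : ℕ) (n : ℕ) : ℤ :=
  if h : n = 0 then base
  else tok (if n % 2 = 0 then b0 else b1) (encN base b0 b1 (n / 2))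
termination_by n
decreasing_by omega

section
open PartrecToTM2

theorem encL_trNat {Γ : Type} (m : ℕ) (sy : Γ → ℕ) (f : PartrecToTM2.Γ' → Γ) (c : Γ) (n : ℕ) :
    encL m sy ((trNat n).map f ++ [c]) =
      encN (tok (4 * sy c) (tok (4 * m) (-1))) (4 * sy (f .bit0)) (4 * sy (f .bit1)) n := by
  induction n using Nat.strong_induction_on with
  | _ n ih =>
    rw [encN]
    split_ifs with h0 h1
    · subst h0; simp [encL]
    · have e : trNat n = Γ'.bit0 :: trNat (n / 2) := by
        have hb : n = Nat.bit false (n / 2) := by simp [Nat.bit]; omega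
        have h2 : n / 2 ≠ 0 := by omega
        conv_lhs => rw [hb]
        simp only [trNat, Num.ofNat'_bit, ← Num.ofNat'_eq]
        rcases e : Num.ofNat' (n / 2) with _ | p
        · exfalso
          rw [Num.ofNat'_eq] at e
          have : ((n/2 : ℕ) : Num) = ((0 : ℕ) : Num) := e.trans Nat.cast_zero.symm
          exact h2 (Nat.cast_injective this)
        · rfl
      rw [e, ← ih (n / 2) (by omega)]
      rfl
    · have e : trNat n = Γ'.bit1 :: trNat (n / 2) := by
        have hb : n = Nat.bit true (n / 2) := by simp [Nat.bit]; omega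
        conv_lhs => rw [hb]
        simp only [trNat, Num.ofNat'_bit, ← Num.ofNat'_eq]
        rcases e : Num.ofNat' (n / 2) with _ | p
        · rfl
        · rfl
      rw [e, ← ih (n / 2) (by omega)]
      rfl

instance finK : Finite PartrecToTM2.K' := by
  refine Finite.of_injective (fun k : PartrecToTM2.K' => (match k with
    | .main => 0 | .rev => 1 | .aux => 2 | .stack => 3 : Fin 4)) ?_
  intro a b h
  cases a <;> cases b <;> simp_all

theorem exists_prog (c : ToPartrec.Code) : ∃ (Z : List Bool) (base : ℤ) (b0 b1 : ℕ), Cl Z ∧ Z ≠ [] ∧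
    ∀ n, Good Z (St.E, encN base b0 b1 n, -1) ↔ (c.eval [n]).Dom := by
  classical
  let _ : Inhabited PartrecToTM2.Λ' := ⟨trNormal c Cont'.halt⟩
  let _ : Fintype PartrecToTM2.K' := Fintype.ofFinite _
  have h2 := PartrecToTM2.tr_supports c Cont'.halt
  have h1 := TM2to1.tr_supports (M := PartrecToTM2.tr) h2
  have h0 := TM1to0.tr_supports (M := TM2to1.tr PartrecToTM2.tr) h1
  obtain ⟨Z, m, sy, hZ, hZ0, H⟩ := exists_theZ _ _ h0
  let F : PartrecToTM2.Γ' → TM2to1.Γ' PartrecToTM2.K' (fun _ => PartrecToTM2.Γ') :=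
    fun a ↦ (false, Function.update (fun _ ↦ none) K'.main (some a))
  let cc : TM2to1.Γ' PartrecToTM2.K' (fun _ => PartrecToTM2.Γ') :=
    (true, Function.update (fun _ ↦ none) K'.main (some Γ'.cons))
  refine ⟨Z, tok (4 * sy cc) (tok (4 * m) (-1)), 4 * sy (F .bit0), 4 * sy (F .bit1), hZ, hZ0, fun n => ?_⟩
  have := H (TM2to1.trInit K'.main (trList [n]))
  have e9 := TM2to1.tr_eval_dom (M := PartrecToTM2.tr) K'.main (trList [n])
  rw [TM1to0.tr_eval] at this
  replace this := this.trans e9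
  have e1 : (TM2.eval PartrecToTM2.tr K'.main (trList [n])).Dom ↔ (c.eval [n]).Dom := by
    have e2 := PartrecToTM2.tr_eval c [n]
    have e3 : (TM2.init K'.main (trList [n]) : PartrecToTM2.Cfg') = PartrecToTM2.init c [n] := by
      simp only [TM2.init, PartrecToTM2.init]
      congr 1
      funext k; cases k <;> rfl
    have e4 : (halt <$> c.eval [n]).Dom ↔ (c.eval [n]).Dom := Iff.rfl
    rw [← e4, ← e2, ← e3]
    rfl
  replace this := this.trans e1
  rw [← this]
  have e5 : (TM2to1.trInit (Γ := fun _ => PartrecToTM2.Γ') K'.main (trList [n])).reverse =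
      (trNat n).map F ++ [cc] := by
    simp only [TM2to1.trInit, trList]
    simp [F, cc]
    exact congrArg (List.cons cc) (List.map_reverse (f := F) (l := trNat n))
  have e6 := encL_trNat m sy F cc n
  rw [← e5] at e6
  rw [e6]
end

theorem encN_computable (base : ℤ) (b0 b1 : ℕ) (hadd : Primrec₂ ((· + ·) : ℤ → ℤ → ℤ))
    (hmul : Primrec₂ ((· * ·) : ℤ → ℤ → ℤ)) : Computable (encN base b0 b1) := by
  have htok : ∀ k, Primrec (tok k) := fun k => by
    have : Primrec (fun a : ℤ => (2 ^ k * 2) * a + (2 ^ k - 1)) :=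
      hadd.comp (hmul.comp (.const _) .id) (.const _)
    exact this.of_eq fun a => by simp only [tok, xp]; ring
  let f : Unit → ℕ → ℤ := fun _ n => encN base b0 b1 n
  let g : Unit → List ℤ → Option ℤ := fun _ l =>
    if l.length = 0 then some base else
      some (if l.length % 2 = 0 then tok b0 (l.getD (l.length / 2) 0) else tok b1 (l.getD (l.length / 2) 0))
  have hl : Primrec (fun p : Unit × List ℤ => p.2.length) := Primrec.list_length.comp .snd
  have hx : Primrec (fun p : Unit × List ℤ => p.2.getD (p.2.length / 2) 0) :=
    (Primrec.list_getD 0).comp .snd (Primrec.nat_div.comp hl (.const 2))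
  have hg : Primrec₂ g := by
    refine Primrec₂.mk ?_
    refine Primrec.ite (PrimrecRel.comp Primrec.eq hl (.const 0)) (.const _) ?_
    exact Primrec.option_some.comp (Primrec.ite
      (PrimrecRel.comp Primrec.eq (Primrec.nat_mod.comp hl (.const 2)) (.const 0))
      ((htok _).comp hx) ((htok _).comp hx))
  have := Primrec.nat_strong_rec f hg (by
    intro a n
    simp only [g, f, List.length_map, List.length_range]
    conv_rhs => rw [encN]
    split_ifs with h0 h1
    · rfl
    · simp [List.getD, Nat.div_lt_self (Nat.pos_of_ne_zero h0)]
    · simp [List.getD, Nat.div_lt_self (Nat.pos_of_ne_zero h0)])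
  exact (this.comp (.const ()) .id).to_comp

theorem universal (hadd : Primrec₂ ((· + ·) : ℤ → ℤ → ℤ))
    (hmul : Primrec₂ ((· * ·) : ℤ → ℤ → ℤ)) :
    ∃ (Z : List Bool) (enc : ℕ → ℤ), Z ≠ [] ∧ Computable enc ∧
    ¬ ComputablePred (fun n => Good Z (St.E, enc n, -1)) := by
  have hp : Partrec (fun n : ℕ => Nat.Partrec.Code.eval (Denumerable.ofNat Nat.Partrec.Code n) 0) :=
    Nat.Partrec.Code.eval_part.comp (Computable.ofNat _) (Computable.const 0)
  have hp' := Nat.Partrec'.part_iff₁.2 hp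
  obtain ⟨c, hc⟩ := Turing.ToPartrec.Code.exists_code hp'
  obtain ⟨Z, base, b0, b1, -, hZ0, H⟩ := exists_prog c
  refine ⟨Z, encN base b0 b1, hZ0, encN_computable _ _ _ hadd hmul, fun hcomp => ?_⟩
  apply ComputablePred.halting_problem 0
  have h1 : ComputablePred (fun n : ℕ => (Nat.Partrec.Code.eval (Denumerable.ofNat Nat.Partrec.Code n) 0).Dom) := by
    refine hcomp.of_eq fun n => ?_
    rw [H n]
    have := hc (n ::ᵥ List.Vector.nil)
    simp only [List.Vector.cons_val] at this
    rw [show ([n] : List ℕ) = n :: (List.Vector.nil : List.Vector ℕ 0).1 from rfl]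
    rw [this]
    rfl
  have h2 := h1
  refine ComputablePred.computable_of_manyOneReducible (q := fun n : ℕ => (Nat.Partrec.Code.eval (Denumerable.ofNat Nat.Partrec.Code n) 0).Dom) ?_ h1
  exact ⟨Encodable.encode, Computable.encode, fun c => by simp⟩

end Z4F15

namespace Z4F15

section rels
variable {G : Type*} [Group G]

/-- conjugation -/
def cj (a b : G) : G := a * b * a⁻¹

theorem cj_mul (a b s : G) : cj (a * b) s = cj a (cj b s) := by simp [cj, mul_assoc]
theorem cj_inv_cj (a s : G) : cj a⁻¹ (cj a s) = s := by simp [cj, mul_assoc]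
theorem cj_cj_inv (a s : G) : cj a (cj a⁻¹ s) = s := by simp [cj, mul_assoc]
theorem cj_mul' (a s t : G) : cj a (s * t) = cj a s * cj a t := by simp [cj, mul_assoc]
theorem cj_inv' (a s : G) : cj a (s⁻¹) = (cj a s)⁻¹ := by simp [cj, mul_assoc]
theorem cj_zpow (a s : G) (n : ℤ) : cj a (s ^ n) = (cj a s) ^ n := by simp [cj]
theorem cj_one (a : G) : cj 1 a = a := by simp [cj]

def tauK (p τ : G) : G := cj p τ
def tauJ (x p τ : G) : G := cj p⁻¹ (cj x (tauK p τ))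

/-- the 12 pairs (left side, right side) -/
def relPair (l : ℕ) (ζ : ℤ) (x p v τ k : G) : Fin 12 → G × G :=
  let y := cj v x
  let q := cj v p
  let tK := tauK p τ
  let tJ := tauJ x p τ
  ![(v * v, 1), (x * y, y * x), (cj p x, x * x), (p * y, y * p),
    (k * p, p * k), (k * v, v * k),
    (k * cj (x⁻¹ * y⁻¹) tK, cj (x⁻¹ * y⁻¹) tK * k),
    (cj q tJ, tJ), (cj q tK, cj y tJ),
    (cj q⁻¹ (cj q⁻¹ τ), cj p⁻¹ (cj x τ)),
    (cj q⁻¹ (cj y (cj q⁻¹ τ)), cj p⁻¹ τ),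
    (cj (q ^ l) (cj p (cj q⁻¹ (cj y τ))), cj (y ^ ζ) (cj p tK))]

def relEl (l : ℕ) (ζ : ℤ) (x p v τ k : G) (i : Fin 12) : G :=
  (relPair l ζ x p v τ k i).1 * (relPair l ζ x p v τ k i).2⁻¹

theorem relEl_eq_one {l : ℕ} {ζ : ℤ} {x p v τ k : G} {i : Fin 12} :
    relEl l ζ x p v τ k i = 1 ↔ (relPair l ζ x p v τ k i).1 = (relPair l ζ x p v τ k i).2 := by
  unfold relEl; rw [mul_inv_eq_one]

/-- the element attached to a configuration `(E,a,g)` -/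
def TT (x v : G) (a g : ℤ) (s : G) : G := cj (x ^ a * (cj v x) ^ g) s

def wEl (x v τ k : G) (a g : ℤ) : G := k * TT x v a g τ * (TT x v a g τ * k)⁻¹

theorem map_cj {H : Type*} [Group H] (f : G →* H) (a b : G) : f (cj a b) = cj (f a) (f b) := by
  simp [cj]

theorem map_relEl {H : Type*} [Group H] (f : G →* H) (l : ℕ) (ζ : ℤ) (x p v τ k : G) (i : Fin 12) :
    f (relEl l ζ x p v τ k i) = relEl l ζ (f x) (f p) (f v) (f τ) (f k) i := by
  fin_cases i <;> simp [relEl, relPair, tauJ, tauK, cj]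

theorem map_wEl {H : Type*} [Group H] (f : G →* H) (x v τ k : G) (a g : ℤ) :
    f (wEl x v τ k a g) = wEl (f x) (f v) (f τ) (f k) a g := by
  simp [wEl, TT, cj]

end rels

theorem pushCode_eq (l : List Bool) (g : ℤ) : pushCode l g = 2 ^ l.length * g + pushCode l 0 := by
  induction l with
  | nil => simp
  | cons b l ih => rw [pushCode_cons, ih, pushCode_cons, List.length_cons, pow_succ]; ring

section derive
variable {G : Type*} [Group G]

def tauS (x p τ : G) : St → G
  | St.E => τ
  | St.K => tauK p τ
  | St.J => tauJ x p τ

theorem derive (Z : List Bool) (x p v τ k : G)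
    (h : ∀ i, relEl Z.length (pushCode Z 0) x p v τ k i = 1) (c : Cfg) (hc : Good Z c) :
    Commute k (TT x v c.2.1 c.2.2 (tauS x p τ c.1)) := by
  have h0 := relEl_eq_one.1 (h 0)
  have h1 := relEl_eq_one.1 (h 1)
  have h2 := relEl_eq_one.1 (h 2)
  have h3 := relEl_eq_one.1 (h 3)
  have h4 := relEl_eq_one.1 (h 4)
  have h5 := relEl_eq_one.1 (h 5)
  have h6 := relEl_eq_one.1 (h 6)
  have h7 := relEl_eq_one.1 (h 7)
  have h8 := relEl_eq_one.1 (h 8)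
  have h9 := relEl_eq_one.1 (h 9)
  have h10 := relEl_eq_one.1 (h 10)
  have h11 := relEl_eq_one.1 (h 11)
  simp only [relPair, Matrix.cons_val] at h0 h1 h2 h3 h4 h5 h6 h7 h8 h9 h10 h11
  set y := cj v x with hy
  set q := cj v p with hq
  have hvi : v⁻¹ = v := inv_eq_of_mul_eq_one_left h0
  have hvy : cj v y = x := by rw [hy, ← cj_mul, h0, cj_one]
  have hxy : Commute x y := h1
  have hpy : Commute p y := h3
  have hqx : Commute q x := by
    have := congrArg (cj v) h3
    rw [cj_mul', cj_mul', hvy] at this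
    exact this
  have hqy : cj q y = y * y := by
    have := congrArg (cj v) h2
    rw [cj_mul'] at this
    rw [hy, ← this]
    simp [cj, hq, mul_assoc]
  have kp : Commute k p := h4
  have kv : Commute k v := h5
  have kq : Commute k q := (kv.mul_right kp).mul_right kv.inv_right
  have comm_cj : ∀ {b s : G}, Commute k b → (Commute k (cj b s) ↔ Commute k s) := by
    intro b s hb
    constructor
    · intro hs
      have := (hb.inv_right.mul_right hs).mul_right hb
      simpa [cj, mul_assoc] using this
    · intro hs; exact (hb.mul_right hs).mul_right hb.inv_right
  have cp : ∀ a g s, cj p (TT x v a g s) = TT x v (2 * a) g (cj p s) := by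
    intro a g s
    simp only [TT, ← hy]
    rw [← cj_mul, ← cj_mul]
    have e : p * (x ^ a * y ^ g) = x ^ (2 * a) * y ^ g * p := by
      have : cj p (x ^ a) = x ^ (2 * a) := by rw [cj_zpow, h2, zpow_mul]; simp [sq]
      rw [← this, cj]
      rw [mul_assoc _ (y ^ g) p, ← (hpy.zpow_right g).eq]
      group
    rw [e]
  have cq : ∀ a g s, cj q (TT x v a g s) = TT x v a (2 * g) (cj q s) := by
    intro a g s
    simp only [TT, ← hy]
    rw [← cj_mul, ← cj_mul]
    have e : q * (x ^ a * y ^ g) = x ^ a * y ^ (2 * g) * q := by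
      have : cj q (y ^ g) = y ^ (2 * g) := by rw [cj_zpow, hqy, zpow_mul]; simp [sq]
      rw [← this, cj, ← mul_assoc, (hqx.zpow_right a).eq]
      group
    rw [e]
  have cx : ∀ a g s, TT x v a g (cj x s) = TT x v (a + 1) g s := by
    intro a g s
    simp only [TT, ← hy]
    rw [← cj_mul, mul_assoc, ← (hxy.zpow_right g).eq, ← mul_assoc, ← zpow_add_one]
  have cyn : ∀ (n : ℤ) a g s, TT x v a g (cj (y ^ n) s) = TT x v a (g + n) s := by
    intro n a g s
    simp only [TT, ← hy]
    rw [← cj_mul, mul_assoc, ← zpow_add]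
  have cy : ∀ a g s, TT x v a g (cj y s) = TT x v a (g + 1) s := by
    intro a g s; simpa using cyn 1 a g s
  have P1 : ∀ a g s, Commute k (TT x v (2 * a) g (cj p s)) ↔ Commute k (TT x v a g s) := by
    intro a g s; rw [← cp, comm_cj kp]
  have Q1 : ∀ a g s, Commute k (TT x v a (2 * g) (cj q s)) ↔ Commute k (TT x v a g s) := by
    intro a g s; rw [← cq, comm_cj kq]
  have P2 : ∀ a g s, Commute k (TT x v a g (cj p⁻¹ s)) ↔ Commute k (TT x v (2 * a) g s) := by
    intro a g s; rw [← P1, cj_cj_inv]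
  have Q2 : ∀ a g s, Commute k (TT x v a g (cj q⁻¹ s)) ↔ Commute k (TT x v a (2 * g) s) := by
    intro a g s; rw [← Q1, cj_cj_inv]
  have Qn : ∀ (n : ℕ) a g s, Commute k (TT x v a (2 ^ n * g) (cj (q ^ n) s)) ↔
      Commute k (TT x v a g s) := by
    intro n
    induction n with
    | zero => intro a g s; simp [cj_one]
    | succ n ih =>
      intro a g s
      rw [show (2:ℤ) ^ (n+1) * g = 2 ^ n * (2 * g) by ring, pow_succ, cj_mul, ih, Q1]
  have key : ∀ c : Cfg, Commute k (TT x v (step Z c).2.1 (step Z c).2.2 (tauS x p τ (step Z c).1)) →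
      Commute k (TT x v c.2.1 c.2.2 (tauS x p τ c.1)) := by
    rintro ⟨j, a, g⟩ hh
    cases j
    · simp only [step] at hh
      split_ifs at hh with g0 g2
      · obtain ⟨m, rfl⟩ : ∃ m, g = 2 * (2 * m) := ⟨g / 4, by omega⟩
        rw [show 2 * (2 * m) / 4 = m by omega] at hh
        simp only [tauS] at hh ⊢
        rw [← Q2, ← Q2, h9, P2, cx]; exact hh
      · obtain ⟨m, rfl⟩ : ∃ m, g = 2 * (2 * m + 1) := ⟨g / 4, by omega⟩
        rw [show 2 * (2 * m + 1) / 4 = m by omega] at hh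
        simp only [tauS] at hh ⊢
        rw [← Q2, ← cy, ← Q2, h10, P2]; exact hh
      · obtain ⟨m, rfl⟩ : ∃ m, g = 2 * m + 1 := ⟨g / 2, by omega⟩
        rw [show (2 * m + 1) / 2 = m by omega, pushCode_eq] at hh
        simp only [tauS] at hh ⊢
        rw [← cy, ← Q2, ← P1, ← Qn Z.length, h11, cyn, P1]; exact hh
    · simp only [step] at hh
      split_ifs at hh with g0
      · obtain ⟨m, rfl⟩ : ∃ m, a = 2 * m := ⟨a / 2, by omega⟩
        rw [show 2 * m / 2 = m by omega] at hh
        simp only [tauS, tauK] at hh ⊢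
        rw [P1]; exact hh
      · obtain ⟨m, rfl⟩ : ∃ m, a = 2 * m + 1 := ⟨a / 2, by omega⟩
        rw [show (2 * m + 1) / 2 = m by omega] at hh
        simp only [tauS, tauJ] at hh ⊢
        rw [P2, cx] at hh; exact hh
    · simp only [step] at hh
      split_ifs at hh with g0
      · obtain ⟨m, rfl⟩ : ∃ m, g = 2 * m := ⟨g / 2, by omega⟩
        rw [show 2 * m / 2 = m by omega] at hh
        simp only [tauS] at hh ⊢
        rw [← h7, Q1]; exact hh
      · obtain ⟨m, rfl⟩ : ∃ m, g = 2 * m + 1 := ⟨g / 2, by omega⟩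
        rw [show (2 * m + 1) / 2 = m by omega] at hh
        simp only [tauS] at hh ⊢
        rw [← cy, ← h8, Q1]; exact hh
  obtain ⟨n, hn⟩ := hc
  induction n generalizing c with
  | zero =>
    have : c = hcfg := hn
    subst this
    simp only [hcfg, tauS, TT, ← hy, zpow_neg, zpow_one]
    exact h6
  | succ n ih =>
    rw [Function.iterate_succ_apply] at hn
    exact key c (ih _ hn)

theorem derive_wEl (Z : List Bool) (x p v τ k : G)
    (h : ∀ i, relEl Z.length (pushCode Z 0) x p v τ k i = 1) (a g : ℤ) (hc : Good Z (St.E, a, g)) :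
    wEl x v τ k a g = 1 := by
  have := derive Z x p v τ k h _ hc
  unfold wEl
  rw [mul_inv_eq_one]
  exact this

end derive
end Z4F15

namespace Z4F15
open HNNExtension HNNExtension.NormalWord

theorem hnn_sub {G : Type} [Group G] {A B : Subgroup G} (φ : A ≃* B) (T : Subgroup G)
    (hT : ∀ a : A, (a : G) ∈ T ↔ (φ a : G) ∈ T) (g : G)
    (hg : (of g : HNNExtension G A B φ) ∈ Subgroup.closure (of '' (T : Set G) ∪ {t})) : g ∈ T := by
  let A' : Subgroup T := A.subgroupOf T
  let B' : Subgroup T := B.subgroupOf T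
  let φ' : A' ≃* B' :=
    { toFun := fun a => ⟨⟨φ ⟨a.1.1, a.2⟩, (hT _).1 a.1.2⟩, (φ ⟨a.1.1, a.2⟩).2⟩
      invFun := fun b => ⟨⟨φ.symm ⟨b.1.1, b.2⟩, (hT _).2 (by simp)⟩, (φ.symm ⟨b.1.1, b.2⟩).2⟩
      left_inv := fun a => Subtype.ext (Subtype.ext
        (congrArg (Subtype.val : A → G) (φ.symm_apply_apply ⟨a.1.1, a.2⟩)))
      right_inv := fun b => Subtype.ext (Subtype.ext
        (congrArg (Subtype.val : B → G) (φ.apply_symm_apply ⟨b.1.1, b.2⟩)))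
      map_mul' := fun a b => Subtype.ext (Subtype.ext
        (congrArg (Subtype.val : B → G) (φ.map_mul ⟨a.1.1, a.2⟩ ⟨b.1.1, b.2⟩))) }
  let Φ : HNNExtension T A' B' φ' →* HNNExtension G A B φ :=
    lift (of.comp T.subtype) t (fun a => t_mul_of (φ := φ) ⟨a.1.1, a.2⟩)
  have Φof : ∀ s : T, Φ (of s) = of (s : G) := fun s => lift_of _ _ _ _
  have Φt : Φ t = t := lift_t _ _ _
  have hle : Subgroup.closure (of '' (T : Set G) ∪ {t}) ≤ Φ.range := by
    rw [Subgroup.closure_le]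
    rintro _ (⟨h, hh, rfl⟩ | rfl)
    · exact ⟨of ⟨h, hh⟩, Φof _⟩
    · exact ⟨t, Φt⟩
  obtain ⟨z, hz⟩ := hle hg
  obtain ⟨d⟩ := TransversalPair.nonempty T A' B'
  let w : ReducedWord T A' B' := (z • (empty : NormalWord d)).toReducedWord
  have hw : w.prod φ' = z := by
    have := prod_smul φ' z (empty : NormalWord d)
    simpa [ReducedWord.prod] using this
  have hmem : ∀ (u : ℤˣ) (s : T), (s : G) ∈ toSubgroup A B u → s ∈ toSubgroup A' B' u := by
    intro u s hs
    rcases Int.units_eq_one_or u with rfl | rfl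
    · exact hs
    · exact hs
  let w' : ReducedWord G A B :=
    { head := w.head
      toList := w.toList.map (fun x => (x.1, (x.2 : G)))
      chain := by
        rw [List.isChain_map]
        exact w.chain.imp fun a b h hh => h (hmem _ _ hh) }
  have hw' : w'.prod φ = of g := by
    rw [← hz, ← hw]
    simp only [ReducedWord.prod, w', map_mul, map_list_prod, List.map_map]
    congr 1
    congr 1
    apply List.map_congr_left
    intro x _
    simp [Φof, Φt]
  have := ReducedWord.toList_eq_nil_of_mem_of_range φ w' (by rw [hw']; exact ⟨g, rfl⟩)
  have e : (of (w.head : G) : HNNExtension G A B φ) = of g := by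
    rw [← hw', ReducedWord.prod, this]; simp [w']
  rw [← of_injective (φ := φ) e]
  exact w.head.2

theorem hnn_exists {G : Type} [Group G] {W : Type} [Group W] (a c : W →* G)
    (ha : Function.Injective a) (hc : Function.Injective c) :
    ∃ (M : Type) (_ : Group M) (o : G →* M) (s : M), Function.Injective o ∧
      (∀ w, s * o (a w) * s⁻¹ = o (c w)) ∧
      ∀ T : Subgroup G, (∀ w, a w ∈ T ↔ c w ∈ T) → ∀ g,
        o g ∈ Subgroup.closure (o '' (T : Set G) ∪ {s}) → g ∈ T := by
  let φ : a.range ≃* c.range := (MonoidHom.ofInjective ha).symm.trans (MonoidHom.ofInjective hc)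
  have hφ : ∀ w, (φ ⟨a w, w, rfl⟩ : G) = c w := by
    intro w
    have : (⟨a w, w, rfl⟩ : a.range) = MonoidHom.ofInjective ha w := rfl
    rw [this]
    simp only [φ, MulEquiv.trans_apply, MulEquiv.symm_apply_apply]
    rfl
  refine ⟨HNNExtension G a.range c.range φ, inferInstance, of, t, of_injective _, fun w => ?_, fun T hT => ?_⟩
  · rw [← hφ w, equiv_eq_conj]
  · apply hnn_sub
    rintro ⟨_, w, rfl⟩
    rw [hφ]; exact hT w
end Z4F15

namespace Z4F15
open SemidirectProduct Multiplicative

section wreath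
variable {B Γ B' Γ' : Type} [Group Γ] [Group Γ'] (ρ : Γ →* Equiv.Perm B) (ρ' : Γ' →* Equiv.Perm B')

noncomputable def dAct : Γ →* MulAut (Multiplicative (B →₀ ℤ)) where
  toFun γ := AddEquiv.toMultiplicative (Finsupp.domCongr (ρ γ))
  map_one' := by
    ext f : 1
    apply toAdd.injective
    ext b
    simp; rfl
  map_mul' γ δ := by
    ext f : 1
    apply toAdd.injective
    ext b
    simp; rfl

abbrev Wr := Multiplicative (B →₀ ℤ) ⋊[dAct ρ] Γ

noncomputable def wmap (f : B → B') (h : Γ →* Γ') (hc : ∀ γ b, f (ρ γ b) = ρ' (h γ) (f b)) :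
    Wr ρ →* Wr ρ' :=
  SemidirectProduct.map (AddMonoidHom.toMultiplicative (Finsupp.mapDomain.addMonoidHom f)) h (by
    intro γ
    refine MonoidHom.ext fun s => ?_
    apply toAdd.injective
    change Finsupp.mapDomain f (Finsupp.equivMapDomain (ρ γ) (toAdd s)) =
      Finsupp.equivMapDomain (ρ' (h γ)) (Finsupp.mapDomain f (toAdd s))
    rw [Finsupp.equivMapDomain_eq_mapDomain, Finsupp.equivMapDomain_eq_mapDomain,
      ← Finsupp.mapDomain_comp, ← Finsupp.mapDomain_comp]
    congr 1
    funext b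
    exact hc γ b)

noncomputable def dl (b : B) : Wr ρ := inl (ofAdd (Finsupp.single b 1))

variable {ρ ρ'}

theorem wmap_left (f : B → B') (h : Γ →* Γ') (hc) (w : Wr ρ) :
    (wmap ρ ρ' f h hc w).left = ofAdd (Finsupp.mapDomain f (toAdd w.left)) := rfl
theorem wmap_right (f : B → B') (h : Γ →* Γ') (hc) (w : Wr ρ) :
    (wmap ρ ρ' f h hc w).right = h w.right := rfl

theorem wmap_dl (f : B → B') (h : Γ →* Γ') (hc) (b : B) :
    wmap ρ ρ' f h hc (dl ρ b) = dl ρ' (f b) := by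
  ext : 1
  · rw [wmap_left]; simp [dl]
  · rw [wmap_right]; simp [dl]

theorem wmap_inr (f : B → B') (h : Γ →* Γ') (hc) (γ : Γ) :
    wmap ρ ρ' f h hc (inr γ) = inr (h γ) := by
  ext : 1
  · rw [wmap_left]; simp
  · rw [wmap_right]; simp

theorem cj_dl (γ : Γ) (b : B) : cj (inr γ : Wr ρ) (dl ρ b) = dl ρ (ρ γ b) := by
  unfold cj dl
  rw [← map_inv, ← inl_aut]
  congr 1
  apply toAdd.injective
  change Finsupp.equivMapDomain (ρ γ) (Finsupp.single b 1) = _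
  rw [Finsupp.equivMapDomain_single]; rfl

theorem wmap_injective (f : B → B') (h : Γ →* Γ') (hc) (hf : Function.Injective f)
    (hh : Function.Injective h) : Function.Injective (wmap ρ ρ' f h hc) := by
  intro a b hab
  ext : 1
  · have := congrArg SemidirectProduct.left hab
    rw [wmap_left, wmap_left] at this
    exact toAdd.injective (Finsupp.mapDomain_injective hf (ofAdd.injective this))
  · have := congrArg SemidirectProduct.right hab
    exact hh this

/-- the subgroup of elements supported in `S` with base part in `U` -/
def supSub (S : Set B) (U : Subgroup Γ) (hU : ∀ γ ∈ U, ∀ b, ρ γ b ∈ S ↔ b ∈ S) : Subgroup (Wr ρ) where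
  carrier := {w | (∀ b, toAdd w.left b ≠ 0 → b ∈ S) ∧ w.right ∈ U}
  one_mem' := ⟨by simp, U.one_mem⟩
  mul_mem' := by
    rintro a b ⟨ha, ha'⟩ ⟨hb, hb'⟩
    refine ⟨fun c hc => ?_, U.mul_mem ha' hb'⟩
    by_contra hcS
    apply hc
    have e1 : toAdd a.left c = 0 := by by_contra h; exact hcS (ha c h)
    have e2 : toAdd b.left ((ρ a.right).symm c) = 0 := by
      by_contra h
      apply hcS
      have := (hU _ ha' _).2 (hb _ h)
      simpa using this
    rw [mul_left]
    change toAdd a.left c + toAdd b.left ((ρ a.right).symm c) = 0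
    rw [e1, e2]; rfl
  inv_mem' := by
    rintro a ⟨ha, ha'⟩
    refine ⟨fun c hc => ?_, U.inv_mem ha'⟩
    rw [inv_left] at hc
    have hc2 : - toAdd a.left ((ρ a.right⁻¹).symm c) ≠ 0 := hc
    have := ha _ (neg_ne_zero.1 hc2)
    have := (hU _ (U.inv_mem ha') _).2 this
    simpa using this

theorem mem_supSub {S : Set B} {U : Subgroup Γ} {hU} {w : Wr ρ} :
    w ∈ supSub S U hU ↔ (∀ b, toAdd w.left b ≠ 0 → b ∈ S) ∧ w.right ∈ U := Iff.rfl

theorem dl_mem {S : Set B} {U : Subgroup Γ} {hU} {b : B} :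
    dl ρ b ∈ supSub S U hU ↔ b ∈ S := by
  rw [mem_supSub]
  constructor
  · intro h; exact h.1 b (by simp [dl])
  · intro h
    refine ⟨fun c hc => ?_, by simp [dl, U.one_mem]⟩
    by_cases e : b = c
    · exact e ▸ h
    · exact (hc (by simp [dl, e])).elim

theorem wmap_mem (f : B → B') (h : Γ →* Γ') (hc) (hf : Function.Injective f) {S : Set B'} {U : Subgroup Γ'} {hU}
    (w : Wr ρ) : wmap ρ ρ' f h hc w ∈ supSub S U hU ↔
      (∀ b, toAdd w.left b ≠ 0 → f b ∈ S) ∧ h w.right ∈ U := by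
  rw [mem_supSub, wmap_right, wmap_left]
  refine and_congr ?_ Iff.rfl
  change (∀ b, Finsupp.mapDomain f (toAdd w.left) b ≠ 0 → b ∈ S) ↔ _
  constructor
  · intro H b hb
    exact H _ (by rwa [Finsupp.mapDomain_apply hf])
  · intro H b hb
    by_cases hb' : b ∈ Set.range f
    · obtain ⟨b, rfl⟩ := hb'
      rw [Finsupp.mapDomain_apply hf] at hb
      exact H b hb
    · exact (hb (Finsupp.mapDomain_of_notMem_range _ _ hb')).elim

end wreath
end Z4F15

namespace Z4F15
open SemidirectProduct Multiplicative

inductive MS | E | K | J | y1 | mX | mY | s | u (n : ℕ)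
deriving DecidableEq

abbrev XX := Bool × ℤ × ℤ
abbrev BB := MS × XX

/-- goodness of model configurations -/
def GoodM (Z : List Bool) : MS → ℤ → ℤ → Prop
  | .E, a, g => Good Z (St.E, a, g)
  | .K, a, g => Good Z (St.K, a, g)
  | .J, a, g => Good Z (St.J, a, g)
  | .y1, a, g => Good Z (St.E, a, 2 * g)
  | .mX, a, g => Good Z (St.E, 2 * a + 1, g)
  | .mY, a, g => Good Z (St.E, 2 * a, g)
  | .s, a, g => Good Z (St.E, a, 2 * g + 1)
  | .u n, a, g => ∃ b h, a = 2 * b ∧ 2 ^ Z.length * g = 2 ^ n * (h - pushCode Z 0) ∧ Good Z (St.K, b, h)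

def GoodS (Z : List Bool) : Set BB :=
  {b | if b.2.1 then GoodM Z b.1 b.2.2.2 b.2.2.1 else GoodM Z b.1 b.2.2.1 b.2.2.2}

inductive Edge | pJ | pE | pX | pY | pS | pK | qJ | qK | qy | qX | qY | qS | qu (n : ℕ)

def src : Edge → MS × Bool
  | .pJ => (.J, false) | .pE => (.E, false) | .pX => (.mX, false) | .pY => (.mY, false)
  | .pS => (.s, false) | .pK => (.K, false)
  | .qJ => (.J, true) | .qK => (.K, true) | .qy => (.y1, true) | .qX => (.mX, true)
  | .qY => (.mY, true) | .qS => (.s, true) | .qu n => (.u n, true)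

/-- target, doubled offset, other offset -/
def tgt (Z : List Bool) : Edge → (MS × Bool) × ℤ × ℤ
  | .pJ => ((.K, false), 1, 0) | .pE => ((.K, false), 0, 0) | .pX => ((.E, false), 1, 0)
  | .pY => ((.E, false), 0, 0)
  | .pS => ((.u 0, false), 0, 0) | .pK => ((.u Z.length, false), 0, - pushCode Z 0)
  | .qJ => ((.J, true), 0, 0) | .qK => ((.J, true), 1, 0) | .qy => ((.E, true), 0, 0)
  | .qX => ((.y1, true), 0, 0)
  | .qY => ((.y1, true), 1, 0) | .qS => ((.E, true), 1, 0) | .qu n => ((.u (n+1), true), 0, 0)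

def fa : Edge × ℤ × ℤ → BB := fun e => ((src e.1).1, (src e.1).2, e.2.1, e.2.2)
def fc (Z : List Bool) : Edge × ℤ × ℤ → BB := fun e =>
  ((tgt Z e.1).1.1, (tgt Z e.1).1.2, 2 * e.2.1 + (tgt Z e.1).2.1, e.2.2 + (tgt Z e.1).2.2)

theorem fa_inj : Function.Injective fa := by
  rintro ⟨e, m⟩ ⟨e', m'⟩ h
  simp only [fa, Prod.mk.injEq] at h
  have he : e = e' := by cases e <;> cases e' <;> simp_all [src]
  subst he
  ext
  · rfl
  · exact h.2.2.1
  · exact h.2.2.2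

theorem fc_inj {Z : List Bool} (hZ : Z ≠ []) : Function.Injective (fc Z) := by
  have hZ' : Z.length ≠ 0 := by simpa using hZ
  rintro ⟨e, m⟩ ⟨e', m'⟩ h
  simp only [fc, Prod.mk.injEq] at h
  have he : e = e' := by
    cases e <;> cases e' <;> simp [tgt, hZ] at h ⊢ <;> omega
  subst he
  ext
  · rfl
  · have := h.2.2.1; simp only at this ⊢; omega
  · have := h.2.2.2; simp only at this ⊢; omega

theorem good_edge (Z : List Bool) (b : Edge × ℤ × ℤ) : fa b ∈ GoodS Z ↔ fc Z b ∈ GoodS Z := by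
  have key : ∀ c d, step Z c = d → (Good Z c ↔ Good Z d) := by
    intro c d h; rw [← h, good_step]
  obtain ⟨e, m, n⟩ := b
  cases e <;> simp only [fa, fc, src, tgt, GoodS, GoodM, Set.mem_ofPred_eq, if_true, if_false, Bool.false_eq_true, add_zero]
  · exact (key _ _ (by simp [step]; omega)).symm
  · exact (key _ _ (by simp [step])).symm
  · constructor
    · intro h
      refine ⟨m, 2 ^ Z.length * n + pushCode Z 0, rfl, by ring, ?_⟩
      rw [← pushCode_eq]
      refine (key _ _ ?_).1 h
      simp only [step]
      rw [if_neg (by omega), if_neg (by omega), show (2 * n + 1) / 2 = n by omega]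
    · rintro ⟨b, h, e1, e2, e3⟩
      have : b = m := by omega
      subst this
      have : h = pushCode Z n := by rw [pushCode_eq]; linarith
      subst this
      refine (key _ _ ?_).2 e3
      simp only [step]
      rw [if_neg (by omega), if_neg (by omega), show (2 * n + 1) / 2 = n by omega]
  · constructor
    · intro h
      exact ⟨m, n, rfl, by ring, h⟩
    · rintro ⟨b, h, e1, e2, e3⟩
      have : b = m := by omega
      subst this
      have := mul_left_cancel₀ (by positivity) e2
      have : h = n := by linarith
      subst this
      exact e3
  · exact (key _ _ (by simp [step])).symm
  · exact (key _ _ (by simp [step]; omega)).symm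
  · refine (key _ _ ?_).symm
    simp only [step]
    rw [if_pos (by omega), show 2 * (2 * m) / 4 = m by omega]
  · refine (key _ _ ?_).symm
    simp only [step]
    rw [if_neg (by omega), if_pos (by omega), show 2 * (2 * m + 1) / 4 = m by omega]
  · refine exists_congr fun b => exists_congr fun h => and_congr Iff.rfl (and_congr ?_ Iff.rfl)
    rw [pow_succ]
    constructor
    · intro h; linarith
    · intro h; linarith

/-- translations -/
def trX : Multiplicative (ℤ × ℤ) →* Equiv.Perm XX where
  toFun m := ⟨fun b => (b.1, b.2.1 + (toAdd m).1, b.2.2 + (toAdd m).2),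
    fun b => (b.1, b.2.1 - (toAdd m).1, b.2.2 - (toAdd m).2),
    fun b => by simp, fun b => by simp⟩
  map_one' := by ext b <;> simp
  map_mul' m n := by ext b <;> simp [Equiv.Perm.mul_apply] <;> ring

def flipX : Equiv.Perm XX := ⟨fun b => (!b.1, b.2.2, b.2.1), fun b => (!b.1, b.2.2, b.2.1),
  fun b => by simp, fun b => by simp⟩

def rhoX : Equiv.Perm XX →* Equiv.Perm BB where
  toFun π := Equiv.prodCongr (Equiv.refl _) π
  map_one' := by ext b <;> rfl
  map_mul' m n := by ext b <;> rfl

def rhoW : Multiplicative (ℤ × ℤ) →* Equiv.Perm (Edge × ℤ × ℤ) where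
  toFun m := ⟨fun b => (b.1, b.2.1 + (toAdd m).1, b.2.2 + (toAdd m).2),
    fun b => (b.1, b.2.1 - (toAdd m).1, b.2.2 - (toAdd m).2),
    fun b => by simp, fun b => by simp⟩
  map_one' := by ext b <;> simp
  map_mul' m n := by ext b <;> simp [Equiv.Perm.mul_apply] <;> ring

def dbl : Multiplicative (ℤ × ℤ) →* Multiplicative (ℤ × ℤ) where
  toFun m := ofAdd (2 * (toAdd m).1, (toAdd m).2)
  map_one' := rfl
  map_mul' m n := by
    apply toAdd.injective
    ext <;> simp [mul_add]

theorem trX_apply (m : Multiplicative (ℤ × ℤ)) (b : XX) :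
    trX m b = (b.1, b.2.1 + (toAdd m).1, b.2.2 + (toAdd m).2) := rfl

theorem trX_inj : Function.Injective trX := by
  intro m n h
  have := congrArg (fun π : Equiv.Perm XX => π (false, 0, 0)) h
  simp only [trX_apply, Prod.mk.injEq, true_and, zero_add] at this
  exact toAdd.injective (Prod.ext this.1 this.2)

theorem dbl_inj : Function.Injective dbl := by
  intro m n h
  have h1 := congrArg (fun z => (toAdd z).1) h
  have h2 := congrArg (fun z => (toAdd z).2) h
  simp [dbl] at h1 h2
  exact toAdd.injective (Prod.ext h1 h2)

theorem wa_compat : ∀ γ b, fa (rhoW γ b) = rhoX (trX γ) (fa b) := fun _ _ => rfl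
noncomputable def wa : Wr rhoW →* Wr rhoX := wmap rhoW rhoX fa trX wa_compat
noncomputable def wc (Z : List Bool) : Wr rhoW →* Wr rhoX := wmap rhoW rhoX (fc Z) (trX.comp dbl) (by
  rintro m ⟨e, b⟩
  simp only [fc, rhoX, rhoW, dbl, trX, MonoidHom.coe_mk, OneHom.coe_mk, Equiv.coe_fn_mk,
    MonoidHom.comp_apply, Equiv.prodCongr_apply, Prod.map, Equiv.refl_apply, toAdd_ofAdd]
  ext <;> simp <;> ring)

/-- base permutations allowed in the subgroup -/
def UX (Z : List Bool) : Subgroup (Equiv.Perm XX) where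
  carrier := {π | (∀ b, rhoX π b ∈ GoodS Z ↔ b ∈ GoodS Z) ∧ ∀ c, ∃ c', π (c, 0, 0) = (c', 0, 0)}
  one_mem' := ⟨fun b => Iff.rfl, fun c => ⟨c, rfl⟩⟩
  mul_mem' := by
    rintro a b ⟨ha, ha'⟩ ⟨hb, hb'⟩
    refine ⟨fun c => ?_, fun c => ?_⟩
    · rw [map_mul, Equiv.Perm.mul_apply, ha, hb]
    · obtain ⟨c1, h1⟩ := hb' c
      obtain ⟨c2, h2⟩ := ha' c1
      exact ⟨c2, by rw [Equiv.Perm.mul_apply, h1, h2]⟩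
  inv_mem' := by
    rintro a ⟨ha, ha'⟩
    refine ⟨fun c => ?_, fun c => ?_⟩
    · rw [← ha, ← Equiv.Perm.mul_apply, ← map_mul]; simp
    · have : ∃ d, a (d, 0, 0) = (c, 0, 0) := by
        obtain ⟨c1, h1⟩ := ha' false
        obtain ⟨c2, h2⟩ := ha' true
        have hne : c1 ≠ c2 := by
          intro e; rw [e, ← h2] at h1
          have := a.injective h1
          simp at this
        rcases eq_or_ne c1 c with e | e
        · exact ⟨false, by rw [h1, e]⟩
        · refine ⟨true, ?_⟩
          rw [h2]
          have : c2 = c := by cases c1 <;> cases c2 <;> cases c <;> simp_all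
          rw [this]
      obtain ⟨d, hd⟩ := this
      exact ⟨d, by rw [← hd]; simp⟩

theorem flip_mem (Z : List Bool) : flipX ∈ UX Z := by
  refine ⟨?_, fun c => ⟨!c, rfl⟩⟩
  rintro ⟨j, c, u, w⟩
  cases c <;> simp [rhoX, flipX, GoodS]

theorem trX_mem (Z : List Bool) (m : Multiplicative (ℤ × ℤ)) : trX m ∈ UX Z ↔ m = 1 := by
  constructor
  · rintro ⟨-, h⟩
    obtain ⟨c', h⟩ := h false
    simp only [trX_apply, Prod.mk.injEq, zero_add] at h
    exact toAdd.injective (Prod.ext h.2.1 h.2.2)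
  · rintro rfl; simp


theorem model_base (Z : List Bool) (hZ : Z ≠ []) (a g : ℤ) (hg : ¬ Good Z (St.E, a, g)) :
    ∃ (M : Type) (_ : Group M) (L : Subgroup M) (x p v τ : M),
      (∀ i : Fin 12, i ≠ 4 → i ≠ 5 → i ≠ 6 → relEl Z.length (pushCode Z 0) x p v τ 1 i = 1) ∧
      p ∈ L ∧ v ∈ L ∧ cj (x⁻¹ * (cj v x)⁻¹) (tauK p τ) ∈ L ∧ TT x v a g τ ∉ L := by
  obtain ⟨M, iM, o, p, hinj, hconj, hT⟩ := hnn_exists wa (wc Z)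
    (wmap_injective _ _ _ fa_inj trX_inj)
    (wmap_injective _ _ _ (fc_inj hZ) (trX_inj.comp dbl_inj))
  let T : Subgroup (Wr rhoX) := supSub (GoodS Z) (UX Z) (fun γ hγ => hγ.1)
  have hTT : ∀ w, wa w ∈ T ↔ wc Z w ∈ T := by
    intro w
    unfold wa wc
    rw [wmap_mem _ _ _ fa_inj, wmap_mem _ _ _ (fc_inj hZ)]
    refine and_congr (forall_congr' fun b => imp_congr Iff.rfl (good_edge Z b)) ?_
    rw [MonoidHom.comp_apply, trX_mem, trX_mem]
    constructor
    · intro h; rw [h]; simp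
    · intro h; exact dbl_inj (h.trans (map_one dbl).symm)
  have hmem := hT T hTT
  let tx : Equiv.Perm XX := trX (ofAdd (1, 0))
  let ty : Equiv.Perm XX := trX (ofAdd (0, 1))
  let x : M := o (inr tx)
  let y : M := o (inr ty)
  let v : M := o (inr flipX)
  let δ : MS → XX → M := fun j b => o (dl rhoX (j, b))
  let D : MS → M := fun j => δ j (false, 0, 0)
  have hact : ∀ (π : Equiv.Perm XX) j b, cj (o (inr π)) (δ j b) = δ j (π b) := by
    intro π j b
    simp only [δ]
    rw [← map_cj, cj_dl]; rfl
  have hyx : cj v x = y := by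
    simp only [v, x, y]
    rw [← map_cj, ← map_cj]
    have : cj flipX tx = ty := by
      refine Equiv.ext fun b => ?_
      rcases b with ⟨_ | _, u, w⟩ <;> rfl
    rw [this]
  have hxn : ∀ n : ℤ, x ^ n = o (inr (trX (ofAdd (n, 0)))) := by
    intro n
    simp only [x, tx]
    rw [← map_zpow, ← map_zpow, ← map_zpow, ← ofAdd_zsmul]; simp
  have hyn : ∀ n : ℤ, y ^ n = o (inr (trX (ofAdd (0, n)))) := by
    intro n
    simp only [y, ty]
    rw [← map_zpow, ← map_zpow, ← map_zpow, ← ofAdd_zsmul]; simp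
  have hpx : cj p x = x * x := by
    have := hconj (inr (ofAdd (1, 0)))
    unfold wa wc at this
    rw [wmap_inr, wmap_inr] at this
    rw [cj, this, ← sq, ← zpow_natCast, hxn]; rfl
  have hpy : cj p y = y := by
    have := hconj (inr (ofAdd (0, 1)))
    unfold wa wc at this
    rw [wmap_inr, wmap_inr] at this
    exact this
  have hvv : v * v = 1 := by
    simp only [v]
    rw [← map_mul, ← map_mul]
    have : flipX * flipX = 1 := by
      ext b <;> simp [flipX, Equiv.Perm.mul_apply]
    rw [this]; simp
  have hxy : x * y = y * x := by
    have : tx * ty = ty * tx := by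
      exact (map_mul trX _ _).symm.trans ((congrArg trX (mul_comm _ _)).trans (map_mul trX _ _))
    simp only [x, y]
    rw [← map_mul, ← map_mul, this, map_mul, map_mul]
  have hedge : ∀ e : Edge, cj p (δ (src e).1 ((src e).2, 0, 0)) =
      δ (tgt Z e).1.1 ((tgt Z e).1.2, (tgt Z e).2.1, (tgt Z e).2.2) := by
    intro e
    have := hconj (dl rhoW (e, 0, 0))
    unfold wa wc at this
    rw [wmap_dl, wmap_dl] at this
    simp only [fa, fc] at this
    rw [cj, this]
    simp [δ]
  have hcx : ∀ (n : ℤ) j c u w, cj (x ^ n) (δ j (c, u, w)) = δ j (c, u + n, w) := by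
    intro n j c u w
    rw [hxn, hact]; simp [trX_apply]
  have hcy : ∀ (n : ℤ) j c u w, cj (y ^ n) (δ j (c, u, w)) = δ j (c, u, w + n) := by
    intro n j c u w
    rw [hyn, hact]; simp [trX_apply]
  have hcx1 : ∀ j c u w, cj x (δ j (c, u, w)) = δ j (c, u + 1, w) := by
    intro j c u w; simpa using hcx 1 j c u w
  have hcy1 : ∀ j c u w, cj y (δ j (c, u, w)) = δ j (c, u, w + 1) := by
    intro j c u w; simpa using hcy 1 j c u w
  have hcv : ∀ j c u w, cj v (δ j (c, u, w)) = δ j (!c, w, u) := by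
    intro j c u w
    rw [hact]; rfl
  have hvi : v⁻¹ = v := inv_eq_of_mul_eq_one_left hvv
  let q := cj v p
  have hqd : ∀ j u w s, cj p (δ j (true, w, u)) = s → cj q (δ j (false, u, w)) = cj v s := by
    intro j u w s h
    rw [show q = v * p * v⁻¹ from rfl, hvi, cj_mul, cj_mul, hcv, ← h]; rfl
  have pJ := hedge .pJ
  have pE := hedge .pE
  have pX := hedge .pX
  have pY := hedge .pY
  have pS := hedge .pS
  have pK := hedge .pK
  have qJ := hqd _ _ _ _ (hedge .qJ)
  have qK := hqd _ _ _ _ (hedge .qK)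
  have qy := hqd _ _ _ _ (hedge .qy)
  have qX := hqd _ _ _ _ (hedge .qX)
  have qY := hqd _ _ _ _ (hedge .qY)
  have qS := hqd _ _ _ _ (hedge .qS)
  have qu := fun n => hqd _ _ _ _ (hedge (.qu n))
  simp only [src, tgt, hcv, Bool.not_true] at pJ pE pX pY pS pK qJ qK qy qX qY qS qu
  have inv1 : ∀ {b s s' : M}, cj b s = s' → cj b⁻¹ s' = s := by
    rintro b s s' rfl; rw [cj_inv_cj]
  have hK : tauK p (D .E) = D .K := pE
  have hJ : tauJ x p (D .E) = D .J := by
    unfold tauJ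
    rw [hK]
    apply inv1
    rw [hcx1]; exact pJ
  have qun : ∀ n : ℕ, cj (q ^ n) (δ (.u 0) (false, 0, 0)) = δ (.u n) (false, 0, 0) := by
    intro n
    induction n with
    | zero => simp [cj_one]
    | succ n ih => rw [pow_succ', cj_mul, ih, qu]
  have mT : ∀ {w}, w ∈ T → o w ∈ Subgroup.closure (o '' (T : Set (Wr rhoX)) ∪ {p}) := fun {w} hw =>
    Subgroup.subset_closure (Or.inl ⟨w, hw, rfl⟩)
  refine ⟨M, iM, Subgroup.closure (o '' (T : Set _) ∪ {p}), x, p, v, D .E, ?_, ?_, ?_, ?_, ?_⟩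
  · intro i h4 h5 h6
    rw [relEl_eq_one]
    simp only [relPair, hK, hJ, hyx]
    fin_cases i
    · exact hvv
    · exact hxy
    · exact hpx
    · change p * y = y * p
      conv_rhs => rw [← hpy]
      simp [cj]
    · exact (h4 rfl).elim
    · exact (h5 rfl).elim
    · exact (h6 rfl).elim
    · exact qJ
    · change cj q (D .K) = cj y (D .J)
      simp only [D]
      rw [hcy1, qK]; rfl
    · change cj q⁻¹ (cj q⁻¹ (D .E)) = cj p⁻¹ (cj x (D .E))
      simp only [D]
      rw [inv1 qy, inv1 qX, hcx1]
      exact (inv1 pX).symm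
    · change cj q⁻¹ (cj y (cj q⁻¹ (D .E))) = cj p⁻¹ (D .E)
      simp only [D]
      rw [inv1 qy, hcy1, zero_add, inv1 qY]
      exact (inv1 pY).symm
    · change cj (q ^ Z.length) (cj p (cj q⁻¹ (cj y (D .E)))) = cj (y ^ pushCode Z 0) (cj p (D .K))
      simp only [D]
      rw [pK, hcy, hcy1, zero_add, inv1 qS, pS, qun]
      simp
  · exact Subgroup.subset_closure (Or.inr rfl)
  · apply mT
    exact ⟨by simp, flip_mem Z⟩
  · rw [hyx, hK, ← zpow_neg_one, ← zpow_neg_one, cj_mul, hcy, hcx]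
    apply mT
    rw [dl_mem]
    simp only [GoodS, GoodM, Set.mem_ofPred_eq]
    exact ⟨0, rfl⟩
  · unfold TT
    rw [hyx, cj_mul, hcy, hcx]
    intro h
    have h2 := hmem _ h
    rw [dl_mem] at h2
    simp only [GoodS, GoodM, Set.mem_ofPred_eq] at h2
    simp at h2
    exact hg h2

theorem relEl_indep {G : Type*} [Group G] {l : ℕ} {ζ : ℤ} {x p v τ k k' : G} (i : Fin 12)
    (h4 : i ≠ 4) (h5 : i ≠ 5) (h6 : i ≠ 6) :
    relEl l ζ x p v τ k i = relEl l ζ x p v τ k' i := by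
  fin_cases i <;> first | exact (h4 rfl).elim | exact (h5 rfl).elim | exact (h6 rfl).elim | simp [relEl, relPair]

theorem model (Z : List Bool) (hZ : Z ≠ []) (a g : ℤ) (hg : ¬ Good Z (St.E, a, g)) :
    ∃ (Q : Type) (_ : Group Q) (x p v τ k : Q),
      (∀ i : Fin 12, relEl Z.length (pushCode Z 0) x p v τ k i = 1) ∧ wEl x v τ k a g ≠ 1 := by
  classical
  obtain ⟨M, iM, L, x, p, v, τ, hrel, hp, hv, hh, hn⟩ := model_base Z hZ a g hg
  let r : M →* Equiv.Perm ((M ⧸ L) × Bool) :=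
    { toFun := fun m => Equiv.prodCongr (MulAction.toPermHom M (M ⧸ L) m) (Equiv.refl _)
      map_one' := by ext b <;> simp
      map_mul' := fun m n => by ext b <;> simp [mul_smul] }
  have hr : ∀ m c b, r m (c, b) = (m • c, b) := fun m c b => rfl
  let e : M ⧸ L := ((1 : M) : M ⧸ L)
  have he : ∀ m : M, m • e = e ↔ m ∈ L := by
    intro m
    simp only [e]
    rw [show m • ((1 : M) : M ⧸ L) = ((m * 1 : M) : M ⧸ L) from rfl, mul_one, QuotientGroup.eq]
    simp
  let k : Equiv.Perm ((M ⧸ L) × Bool) := Equiv.swap (e, false) (e, true)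
  have hk : ∀ m ∈ L, k * r m = r m * k := by
    intro m hm
    have h1 := (he m).2 hm
    have := Equiv.mul_swap_eq_swap_mul (r m) (e, false) (e, true)
    rw [hr, hr, h1] at this
    exact this.symm
  have hk' : ∀ m, k * r m = r m * k → m ∈ L := by
    intro m h
    by_contra hm
    have h1 := congrArg (fun π : Equiv.Perm _ => π (e, false)) h
    have hne : m • e ≠ e := fun h => hm ((he m).1 h)
    simp only [Equiv.Perm.mul_apply, k, Equiv.swap_apply_left, hr] at h1
    rw [Equiv.swap_apply_of_ne_of_ne] at h1
    · simp at h1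
    · intro h; exact hne (congrArg Prod.fst h)
    · intro h; exact hne (congrArg Prod.fst h)
  refine ⟨_, inferInstance, r x, r p, r v, r τ, k, fun i => ?_, fun h => ?_⟩
  · by_cases h4 : i = 4
    · subst h4; exact relEl_eq_one.2 (hk p hp)
    by_cases h5 : i = 5
    · subst h5; exact relEl_eq_one.2 (hk v hv)
    by_cases h6 : i = 6
    · subst h6
      have := hk _ hh
      rw [map_cj, map_mul, map_inv, map_inv, map_cj, tauK, map_cj] at this
      exact relEl_eq_one.2 this
    · have := congrArg r (hrel i h4 h5 h6)
      rw [map_relEl, map_one] at this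
      rw [← this]
      clear this
      exact relEl_indep i h4 h5 h6
  · apply hn
    apply hk'
    unfold wEl at h
    rw [mul_inv_eq_one] at h
    unfold TT at h ⊢
    rw [map_cj, map_mul, map_zpow, map_zpow, map_cj]
    exact h

end Z4F15

namespace Z4F15
open Multiplicative

section emb
/-- the word `b` in the two generators -/
def bw {G : Type*} [Group G] (a t : G) : G := t⁻¹ * a * t
def gw {G : Type*} [Group G] (n : ℕ) (a t : G) : G :=
  t * ((a ^ n)⁻¹ * bw a t * a ^ n) * t⁻¹ * ((bw a t ^ n)⁻¹ * a * bw a t ^ n)⁻¹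

theorem map_gw {G H : Type*} [Group G] [Group H] (f : G →* H) (n : ℕ) (a t : G) :
    f (gw n a t) = gw n (f a) (f t) := by
  simp [gw, bw]

def shiftAut : Multiplicative ℤ →* MulAut (FreeGroup ℤ) where
  toFun n := FreeGroup.freeGroupCongr (Equiv.addRight n.toAdd)
  map_one' := by
    ext1 x; simp
  map_mul' m n := by
    apply MulEquiv.toMonoidHom_injective
    ext x
    simp [add_comm]
    ring_nf

theorem conj_free {G : Type*} [Group G] (a b : G)
    (h : ∃ f : G →* FreeGroup Bool, f a = FreeGroup.of true ∧ f b = FreeGroup.of false) :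
    Function.Injective (FreeGroup.lift (fun n : ℕ => (a ^ n)⁻¹ * b * a ^ n)) := by
  obtain ⟨f, ha, hb⟩ := h
  let θ : FreeGroup Bool →* FreeGroup ℤ ⋊[shiftAut] Multiplicative ℤ :=
    FreeGroup.lift (fun c => if c then SemidirectProduct.inr (ofAdd 1)
      else SemidirectProduct.inl (FreeGroup.of 0))
  have key : (θ.comp f).comp (FreeGroup.lift (fun n : ℕ => (a ^ n)⁻¹ * b * a ^ n)) =
      SemidirectProduct.inl.comp (FreeGroup.map (fun n : ℕ => (-(n:ℤ)))) := by
    ext1 n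
    simp only [MonoidHom.comp_apply, FreeGroup.lift_apply_of, map_mul, map_inv, map_pow, ha, hb, FreeGroup.map.of]
    simp only [θ, FreeGroup.lift_apply_of, if_true, Bool.false_eq_true, if_false]
    rw [← map_pow, ← map_inv, ← inv_inv (ofAdd (1:ℤ) ^ n), inv_inv (ofAdd (1:ℤ) ^ n)⁻¹,
      ← SemidirectProduct.inl_aut]
    congr 1
    simp [shiftAut]
  have hinj : Function.Injective (FreeGroup.map (fun n : ℕ => (-(n:ℤ)))) :=
    FreeGroup.map_injective (fun m n h => by simpa using h)
  have : Function.Injective ((θ.comp f).comp (FreeGroup.lift (fun n : ℕ => (a ^ n)⁻¹ * b * a ^ n))) := by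
    rw [key]
    exact SemidirectProduct.inl_injective.comp hinj
  exact Function.Injective.of_comp (f := θ.comp f) this

theorem conj_free' {Q : Type} [Group Q] (g : ℕ → Q) :
    Function.Injective (FreeGroup.lift (fun n : ℕ =>
      (Monoid.Coprod.inl (g n) : Monoid.Coprod Q (FreeGroup Bool)) *
      ((Monoid.Coprod.inr (FreeGroup.of false) ^ n)⁻¹ * Monoid.Coprod.inr (FreeGroup.of true) *
        Monoid.Coprod.inr (FreeGroup.of false) ^ n))) := by
  have h := conj_free (FreeGroup.of false) (FreeGroup.of true)
    ⟨FreeGroup.map not, by simp, by simp⟩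
  refine Function.Injective.of_comp (f := (Monoid.Coprod.snd : Monoid.Coprod Q (FreeGroup Bool) →* _)) ?_
  rw [← MonoidHom.coe_comp]
  convert h using 2
  ext1 n
  simp

theorem embed2 {Q : Type} [Group Q] (g : ℕ → Q) (h0 : g 0 = 1) :
    ∃ (M : Type) (_ : Group M) (o : Q →* M) (a t : M), Function.Injective o ∧
      ∀ n, o (g n) = gw n a t := by
  obtain ⟨M, iM, o, s, ho, hs, -⟩ := hnn_exists
    (G := Monoid.Coprod Q (FreeGroup Bool))
    (FreeGroup.lift (fun n : ℕ => ((Monoid.Coprod.inr (FreeGroup.of true) : Monoid.Coprod Q (FreeGroup Bool)) ^ n)⁻¹ *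
      Monoid.Coprod.inr (FreeGroup.of false) * Monoid.Coprod.inr (FreeGroup.of true) ^ n))
    (FreeGroup.lift (fun n : ℕ => (Monoid.Coprod.inl (g n) : Monoid.Coprod Q (FreeGroup Bool)) *
      ((Monoid.Coprod.inr (FreeGroup.of false) ^ n)⁻¹ * Monoid.Coprod.inr (FreeGroup.of true) *
        Monoid.Coprod.inr (FreeGroup.of false) ^ n)))
    (conj_free _ _ ⟨Monoid.Coprod.snd, by simp, by simp⟩) (conj_free' g)
  refine ⟨M, iM, o.comp Monoid.Coprod.inl, o (Monoid.Coprod.inr (FreeGroup.of true)), s,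
    ho.comp Monoid.Coprod.inl_injective, fun n => ?_⟩
  have hb : o (Monoid.Coprod.inr (FreeGroup.of false)) =
      bw (o (Monoid.Coprod.inr (FreeGroup.of true))) s := by
    have := hs (FreeGroup.of 0)
    simp [h0] at this
    rw [bw, ← this]; group
  have := hs (FreeGroup.of n)
  simp only [FreeGroup.lift_apply_of, map_mul, map_inv, map_pow] at this
  rw [gw, ← hb, this]
  simp [mul_assoc]
end emb

abbrev F2 := FreeGroup Bool
def ga : F2 := FreeGroup.of true
def gt : F2 := FreeGroup.of false

/-- the relators in the rank two free group -/
def rj (Z : List Bool) (i : Fin 12) : F2 :=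
  relEl Z.length (pushCode Z 0) (gw 2 ga gt) (gw 3 ga gt) (gw 1 ga gt) (gw 4 ga gt) (gw 5 ga gt) i
def wF (a g : ℤ) : F2 :=
  wEl (gw 2 ga gt) (gw 1 ga gt) (gw 4 ga gt) (gw 5 ga gt) a g
def NZ (Z : List Bool) : Subgroup F2 := Subgroup.normalClosure (Set.range (rj Z))

theorem wc_mem (Z : List Bool) (hZ : Z ≠ []) (a g : ℤ) :
    wF a g ∈ NZ Z ↔ Good Z (St.E, a, g) := by
  constructor
  · intro h
    by_contra hg
    obtain ⟨Q, iQ, x, p, v, τ, k, hrel, hw⟩ := model Z hZ a g hg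
    obtain ⟨M, iM, o, α, t, ho, hgw⟩ := embed2 (fun n => if n = 1 then v else if n = 2 then x else
      if n = 3 then p else if n = 4 then τ else if n = 5 then k else 1) (by simp)
    let θ : F2 →* M := FreeGroup.lift (fun c => if c then α else t)
    have ha : θ ga = α := by simp [θ, ga]
    have ht : θ gt = t := by simp [θ, gt]
    have h1 := hgw 1
    have h2 := hgw 2
    have h3 := hgw 3
    have h4 := hgw 4
    have h5 := hgw 5
    simp at h1 h2 h3 h4 h5
    have hN : NZ Z ≤ θ.ker := by
      apply Subgroup.normalClosure_le_normal
      rintro _ ⟨i, rfl⟩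
      show θ (rj Z i) = 1
      rw [rj, map_relEl]
      simp only [map_gw, ha, ht]
      rw [← h1, ← h2, ← h3, ← h4, ← h5, ← map_relEl, hrel, map_one]
    have := hN h
    rw [MonoidHom.mem_ker, wF, map_wEl] at this
    simp only [map_gw, ha, ht] at this
    rw [← h1, ← h2, ← h4, ← h5, ← map_wEl] at this
    exact hw (ho (this.trans (map_one o).symm))
  · intro h
    have : (NZ Z).Normal := Subgroup.normalClosure_normal
    rw [← QuotientGroup.eq_one_iff]
    show QuotientGroup.mk' (NZ Z) (wF a g) = 1
    rw [wF, map_wEl]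
    apply derive_wEl Z _ (QuotientGroup.mk' (NZ Z) (gw 3 ga gt))
    · intro i
      rw [← map_relEl]
      show ((rj Z i : F2) : F2 ⧸ NZ Z) = 1
      rw [QuotientGroup.eq_one_iff]
      exact Subgroup.subset_normalClosure ⟨i, rfl⟩
    · exact h
end Z4F15

namespace Z4F15

theorem comm_cyc {α : Type} (A : Subgroup (FreeGroup α)) (hA : ∀ x ∈ A, ∀ y ∈ A, x * y = y * x) :
    ∃ c ∈ A, ∀ x ∈ A, ∃ n : ℤ, x = c ^ n := by
  let e := IsFreeGroup.toFreeGroup A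
  have hc : ∀ x y : FreeGroup (IsFreeGroup.Generators A), x * y = y * x := by
    intro x y
    apply e.symm.injective
    rw [map_mul, map_mul]
    exact Subtype.ext (hA _ (e.symm x).2 _ (e.symm y).2)
  have hs : Subsingleton (IsFreeGroup.Generators A) := by
    by_contra h
    rw [not_subsingleton_iff_nontrivial] at h
    obtain ⟨i, j, hij⟩ := h
    classical
    have h1 := congrArg FreeGroup.toWord (hc (FreeGroup.of i) (FreeGroup.of j))
    simp [FreeGroup.toWord_mul, FreeGroup.toWord_of, FreeGroup.reduce] at h1
    simp [hij, Ne.symm hij] at h1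
  have hcyc : IsCyclic (FreeGroup (IsFreeGroup.Generators A)) := by
    rcases isEmpty_or_nonempty (IsFreeGroup.Generators A) with h | ⟨⟨i⟩⟩
    · infer_instance
    · have : Unique (IsFreeGroup.Generators A) := { default := i, uniq := fun j => Subsingleton.elim _ _ }
      infer_instance
  obtain ⟨g, hg⟩ := hcyc.exists_generator
  refine ⟨e.symm g, (e.symm g).2, fun x hx => ?_⟩
  obtain ⟨n, hn⟩ := hg (e ⟨x, hx⟩)
  refine ⟨n, ?_⟩
  have := congrArg e.symm hn
  simp at this
  rw [← Subgroup.coe_zpow, this]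

theorem comm_pow {α : Type} (x y : FreeGroup α) (h : x * y = y * x) :
    ∃ (c : FreeGroup α) (m n : ℤ), x = c ^ m ∧ y = c ^ n := by
  have hcl : ∀ a ∈ Subgroup.closure {x, y}, ∀ b ∈ Subgroup.closure {x, y}, a * b = b * a := by
    have h2 : ∀ a ∈ ({x, y} : Set (FreeGroup α)), ∀ b ∈ ({x, y} : Set (FreeGroup α)), a * b = b * a := by
      rintro a (rfl | rfl) b (rfl | rfl) <;> first | rfl | exact h | exact h.symm
    intro a ha b hb
    have h1 : ∀ a ∈ ({x, y} : Set (FreeGroup α)), ∀ b ∈ Subgroup.closure {x, y}, a * b = b * a := by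
      intro a ha b hb
      have : Subgroup.closure {x, y} ≤ Subgroup.centralizer {a} := by
        rw [Subgroup.closure_le]
        intro b hb
        rw [SetLike.mem_coe, Subgroup.mem_centralizer_singleton_iff]
        exact h2 _ hb _ ha
      exact (Subgroup.mem_centralizer_singleton_iff.1 (this hb)).symm
    have : Subgroup.closure {x, y} ≤ Subgroup.centralizer {b} := by
      rw [Subgroup.closure_le]
      intro a ha
      rw [SetLike.mem_coe, Subgroup.mem_centralizer_singleton_iff]
      exact h1 _ ha _ hb
    exact Subgroup.mem_centralizer_singleton_iff.1 (this ha)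
  obtain ⟨c, -, hc⟩ := comm_cyc _ hcl
  obtain ⟨m, hm⟩ := hc x (Subgroup.subset_closure (by simp))
  obtain ⟨n, hn⟩ := hc y (Subgroup.subset_closure (by simp))
  exact ⟨c, m, n, hm, hn⟩

theorem zpow_eq_one_free {α : Type} {x : FreeGroup α} {n : ℤ} (hx : x ≠ 1) (h : x ^ n = 1) : n = 0 := by
  by_contra hn
  exact hx (zpow_left_injective hn (by simpa using h))

theorem abelian_normal_trivial {α : Type} (i j : α) (hij : i ≠ j) (A : Subgroup (FreeGroup α))
    (hN : A.Normal) (hA : ∀ x ∈ A, ∀ y ∈ A, x * y = y * x) : A = ⊥ := by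
  classical
  rw [Subgroup.eq_bot_iff_forall]
  by_contra! hne
  obtain ⟨a0, ha0, hne0⟩ := hne
  obtain ⟨a, haA, hac⟩ := comm_cyc A hA
  have ha : a ≠ 1 := by
    rintro rfl
    obtain ⟨n, hn⟩ := hac a0 ha0
    simp at hn; exact hne0 hn
  have hsq : ∀ e : FreeGroup α, (e * e) * a = a * (e * e) := by
    intro e
    obtain ⟨m, hm⟩ := hac _ (hN.conj_mem a haA e)
    obtain ⟨l, hl⟩ := hac _ (hN.conj_mem a haA e⁻¹)
    have h1 : a = a ^ (m * l) := by
      rw [zpow_mul, ← hm, conj_zpow, ← hl]; group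
    have h2 : a ^ (m * l - 1) = 1 := by
      rw [zpow_sub, ← h1]; simp
    have h3 := zpow_eq_one_free ha h2
    have h4 : m * m = 1 := by
      have : m * l = 1 := by omega
      rcases Int.eq_one_or_neg_one_of_mul_eq_one this with rfl | rfl <;> rfl
    have h5 : e * (e * a * e⁻¹) * e⁻¹ = a := by
      rw [hm, ← conj_zpow, hm, ← zpow_mul, h4, zpow_one]
    calc (e * e) * a = (e * (e * a * e⁻¹) * e⁻¹) * (e * e) := by group
      _ = _ := by rw [h5]
  obtain ⟨c, m, n, h1, h2⟩ := comm_pow _ _ (hsq (FreeGroup.of i))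
  obtain ⟨d, m', n', h1', h2'⟩ := comm_pow _ _ (hsq (FreeGroup.of j))
  let θ : FreeGroup α →* Multiplicative ℤ := FreeGroup.lift (fun k => if k = i then Multiplicative.ofAdd 1 else 1)
  let θ' : FreeGroup α →* Multiplicative ℤ := FreeGroup.lift (fun k => if k = j then Multiplicative.ofAdd 1 else 1)
  have hθi : θ (FreeGroup.of i) = Multiplicative.ofAdd 1 := by simp [θ]
  have hθj : θ (FreeGroup.of j) = 1 := by simp [θ, hij.symm]
  have hθ'i : θ' (FreeGroup.of i) = 1 := by simp [θ', hij]
  have hθ'j : θ' (FreeGroup.of j) = Multiplicative.ofAdd 1 := by simp [θ']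
  have hn : n ≠ 0 := by rintro rfl; exact ha (by simpa using h2)
  have hn' : n' ≠ 0 := by rintro rfl; exact ha (by simpa using h2')
  have e1 : a ^ m = (FreeGroup.of i * FreeGroup.of i) ^ n := by
    rw [h1, h2, ← zpow_mul, ← zpow_mul, mul_comm]
  have e2 : a ^ m' = (FreeGroup.of j * FreeGroup.of j) ^ n' := by
    rw [h1', h2', ← zpow_mul, ← zpow_mul, mul_comm]
  have f1 := congrArg (fun z => (θ z).toAdd) e1
  have f2 := congrArg (fun z => (θ z).toAdd) e2
  have g2 := congrArg (fun z => (θ' z).toAdd) e2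
  simp only [map_zpow, map_mul, hθi, hθj, hθ'j, toAdd_zpow, toAdd_mul, toAdd_ofAdd, smul_eq_mul,
    mul_one, toAdd_one, mul_zero] at f1 f2 g2
  rcases mul_eq_zero.1 f2 with h | h
  · rw [h] at g2; simp at g2; exact hn' g2
  · rw [h] at f1; simp at f1; exact hn f1
end Z4F15

namespace Z4F15
open GLPrimcodable

theorem iso_inl {V : Type} [CommGroup V] (φ ψ : FreeGroup (Fin 15) →* MulAut V)
    (Ψ : (V ⋊[φ] FreeGroup (Fin 15)) ≃* (V ⋊[ψ] FreeGroup (Fin 15))) (v : V) :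
    (Ψ (SemidirectProduct.inl v)).right = 1 := by
  let θ : V →* FreeGroup (Fin 15) :=
    (SemidirectProduct.rightHom.comp Ψ.toMonoidHom).comp SemidirectProduct.inl
  have : θ.range = ⊥ := by
    apply abelian_normal_trivial (0 : Fin 15) 1 (by decide)
    · have : θ.range = (SemidirectProduct.inl : V →* V ⋊[φ] FreeGroup (Fin 15)).range.map
          (SemidirectProduct.rightHom.comp Ψ.toMonoidHom) := by
        rw [MonoidHom.map_range]
      rw [this, SemidirectProduct.range_inl_eq_ker_rightHom]
      apply Subgroup.Normal.map
      · infer_instance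
      · exact SemidirectProduct.rightHom_surjective.comp Ψ.surjective
    · rintro _ ⟨x, rfl⟩ _ ⟨y, rfl⟩
      rw [← map_mul, ← map_mul, mul_comm]
  have h : θ v ∈ θ.range := ⟨v, rfl⟩
  rw [this] at h
  exact h

theorem iso_conj {V : Type} [CommGroup V] (φ ψ : FreeGroup (Fin 15) →* MulAut V)
    (Ψ : (V ⋊[φ] FreeGroup (Fin 15)) ≃* (V ⋊[ψ] FreeGroup (Fin 15))) :
    ∃ θ : MulAut V, ∀ u, ∃ u', θ * φ u = ψ u' * θ := by
  have h1 : ∀ v, SemidirectProduct.inl (Ψ (SemidirectProduct.inl v)).left = Ψ (SemidirectProduct.inl v) := by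
    intro v
    ext
    · simp
    · rw [iso_inl]; simp
  have h2 : ∀ v, SemidirectProduct.inl (Ψ.symm (SemidirectProduct.inl v)).left =
      Ψ.symm (SemidirectProduct.inl v) := by
    intro v
    ext
    · simp
    · rw [iso_inl]; simp
  let θ : MulAut V :=
    { toFun := fun v => (Ψ (SemidirectProduct.inl v)).left
      invFun := fun v => (Ψ.symm (SemidirectProduct.inl v)).left
      left_inv := fun v => by
        show (Ψ.symm (SemidirectProduct.inl (Ψ (SemidirectProduct.inl v)).left)).left = v
        rw [h1]; simp
      right_inv := fun v => by
        show (Ψ (SemidirectProduct.inl (Ψ.symm (SemidirectProduct.inl v)).left)).left = v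
        rw [h2]; simp
      map_mul' := fun v w => by
        apply SemidirectProduct.inl_injective (φ := ψ)
        rw [h1, map_mul, map_mul, map_mul, h1, h1] }
  have hθ : ∀ v, SemidirectProduct.inl (θ v) = Ψ (SemidirectProduct.inl v) := h1
  refine ⟨θ, fun u => ⟨(Ψ (SemidirectProduct.inr u)).right, ?_⟩⟩
  ext v
  apply SemidirectProduct.inl_injective (φ := ψ)
  show SemidirectProduct.inl (θ (φ u v)) = SemidirectProduct.inl (ψ _ (θ v))
  rw [hθ, SemidirectProduct.inl_aut, SemidirectProduct.inl_aut, map_mul, map_mul, ← hθ, map_inv, map_inv, map_inv]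
  ext
  · generalize Ψ (SemidirectProduct.inr u) = s
    simp
  · generalize Ψ (SemidirectProduct.inr u) = s
    simp

abbrev GL4 := Matrix.GeneralLinearGroup (Fin 4) ℤ

theorem glAut_apply (g : GL4) (v : Fin 4 → ℤ) :
    glAut g (Multiplicative.ofAdd v) = Multiplicative.ofAdd (g.1.mulVec v) := rfl

def glHom : GL4 →* MulAut (Multiplicative (Fin 4 → ℤ)) where
  toFun := glAut
  map_one' := by
    ext1 v
    induction v using Multiplicative.rec with | _ v => ?_
    rw [glAut_apply]; simp
  map_mul' a b := by
    ext1 v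
    induction v using Multiplicative.rec with | _ v => ?_
    rw [MulAut.mul_apply, glAut_apply, glAut_apply, glAut_apply]; simp

theorem glHom_inj : Function.Injective glHom := by
  intro a b h
  ext i j
  have := congrArg (fun θ : MulAut (Multiplicative (Fin 4 → ℤ)) =>
    (θ (Multiplicative.ofAdd (Pi.single j 1))).toAdd i) h
  change (a.1.mulVec (Pi.single j 1)) i = (b.1.mulVec (Pi.single j 1)) i at this
  simpa using this

theorem glHom_surj : Function.Surjective glHom := by
  intro θ
  let e : (Fin 4 → ℤ) ≃ₗ[ℤ] (Fin 4 → ℤ) := (AddEquiv.toMultiplicative.symm θ).toIntLinearEquiv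
  refine ⟨Matrix.GeneralLinearGroup.toLin.symm
    ((LinearMap.GeneralLinearGroup.generalLinearEquiv ℤ (Fin 4 → ℤ)).symm e), ?_⟩
  ext1 v
  simp only [glHom, MonoidHom.coe_mk, OneHom.coe_mk, glAut]
  rw [MulEquiv.apply_symm_apply, MulEquiv.apply_symm_apply]
  rfl

theorem phiOf_eq (f : Fin 15 → GL4) : phiOf f = glHom.comp (FreeGroup.lift f) := by
  ext1 i
  simp [phiOf]; rfl

theorem gl_conj (f g : Fin 15 → GL4)
    (Ψ : (Multiplicative (Fin 4 → ℤ) ⋊[phiOf f] FreeGroup (Fin 15)) ≃*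
      (Multiplicative (Fin 4 → ℤ) ⋊[phiOf g] FreeGroup (Fin 15))) :
    ∃ R : GL4, ∀ h ∈ (FreeGroup.lift g).range, R * h * R⁻¹ ∈ (FreeGroup.lift f).range := by
  obtain ⟨θ, hθ⟩ := iso_conj _ _ Ψ.symm
  obtain ⟨R, rfl⟩ := glHom_surj θ
  refine ⟨R, ?_⟩
  rintro _ ⟨u, rfl⟩
  obtain ⟨u', hu⟩ := hθ u
  refine ⟨u', ?_⟩
  apply glHom_inj
  rw [phiOf_eq, phiOf_eq] at hu
  simp only [MonoidHom.comp_apply] at hu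
  rw [map_mul, map_mul, hu, map_inv, mul_inv_cancel_right]

theorem gl_iso (f g : Fin 15 → GL4) (h1 : ∀ i : Fin 14, f i.castSucc = g i.castSucc)
    (hf : f (Fin.last 14) = 1)
    (hg : g (Fin.last 14) ∈ (FreeGroup.lift (fun i : Fin 14 => f i.castSucc)).range) :
    Nonempty ((Multiplicative (Fin 4 → ℤ) ⋊[phiOf f] FreeGroup (Fin 15)) ≃*
      (Multiplicative (Fin 4 → ℤ) ⋊[phiOf g] FreeGroup (Fin 15))) := by
  obtain ⟨u0, hu0⟩ := hg
  let u : FreeGroup (Fin 15) := FreeGroup.map Fin.castSucc u0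
  let B : FreeGroup (Fin 15) → FreeGroup (Fin 15) →* FreeGroup (Fin 15) := fun z =>
    FreeGroup.lift (fun i : Fin 15 => Fin.lastCases (motive := fun _ => FreeGroup (Fin 15)) (FreeGroup.of (Fin.last 14) * z)
      (fun j : Fin 14 => FreeGroup.of j.castSucc) i)
  have hB1 : ∀ z (j : Fin 14), B z (FreeGroup.of j.castSucc) = FreeGroup.of j.castSucc := by
    intro z j; simp [B]
  have hB2 : ∀ z, B z (FreeGroup.of (Fin.last 14)) = FreeGroup.of (Fin.last 14) * z := by
    intro z; simp [B, -Fin.reduceLast]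
  have hBu : ∀ z, B z u = u := by
    intro z
    have : (B z).comp (FreeGroup.map Fin.castSucc) = FreeGroup.map Fin.castSucc := by
      ext1 j; simp [hB1]
    exact DFunLike.congr_fun this u0
  have hcomp : ∀ z z', z' = z⁻¹ → B z' z = z → (B z').comp (B z) = MonoidHom.id _ := by
    intro z z' hz h
    subst hz
    ext1 i
    induction i using Fin.lastCases with
    | last => simp [hB2, h, -Fin.reduceLast]
    | cast j => simp [hB1]
  let β : FreeGroup (Fin 15) ≃* FreeGroup (Fin 15) := MonoidHom.toMulEquiv (B u⁻¹) (B u)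
    (hcomp _ _ (by simp) (by rw [map_inv, hBu])) (hcomp _ _ rfl (hBu _))
  have hβ : (FreeGroup.lift g).comp (B u⁻¹) = FreeGroup.lift f := by
    ext1 i
    have hgu : FreeGroup.lift g u = g (Fin.last 14) := by
      rw [← hu0]
      have : (FreeGroup.lift g).comp (FreeGroup.map Fin.castSucc) =
        FreeGroup.lift (fun i : Fin 14 => f i.castSucc) := by
        ext1 j; simp [h1]
      exact DFunLike.congr_fun this u0
    induction i using Fin.lastCases with
    | last => simp [hB2, hf, hgu, -Fin.reduceLast]
    | cast j => simp [hB1, h1]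
  refine ⟨SemidirectProduct.congr (MulEquiv.refl _) β ?_⟩
  intro x
  have : phiOf f x = phiOf g (β x) := by
    rw [phiOf_eq, phiOf_eq, ← hβ]; rfl
  rw [this]; rfl
end Z4F15

namespace Z4F15
open Matrix Pointwise

abbrev SL2 := Matrix.SpecialLinearGroup (Fin 2) ℤ
def sx1 : SL2 := ⟨!![1, 2; 0, 1], by simp⟩
def sx2 : SL2 := ⟨!![1, 0; 2, 1], by simp⟩
def sv : F2 →* SL2 := FreeGroup.lift (fun c => if c then sx1 else sx2)
theorem sv_ga : sv ga = sx1 := by simp [sv, ga]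
theorem sv_gt : sv gt = sx2 := by simp [sv, gt]

theorem sx1_coe : sx1.1 = !![1, 2; 0, 1] := rfl
theorem sx2_coe : sx2.1 = !![1, 0; 2, 1] := rfl
theorem sl_mul (A B : SL2) : (A * B).1 = A.1 * B.1 := rfl
theorem sx1_inv : (sx1⁻¹).1 = !![1, -2; 0, 1] := by
  rw [Matrix.SpecialLinearGroup.coe_inv, sx1_coe, Matrix.adjugate_fin_two]; simp
theorem sx2_inv : (sx2⁻¹).1 = !![1, 0; -2, 1] := by
  rw [Matrix.SpecialLinearGroup.coe_inv, sx2_coe, Matrix.adjugate_fin_two]; simp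
theorem sx1_zpow (n : ℤ) : (sx1 ^ n).1 = !![1, 2 * n; 0, 1] := by
  induction n using Int.induction_on with
  | zero => simp [Matrix.one_fin_two]
  | succ n ih => rw [_root_.zpow_add_one, sl_mul, ih, sx1_coe]; simp; ring
  | pred n ih => rw [_root_.zpow_sub_one, sl_mul, ih, sx1_inv]; simp; ring
theorem sx2_zpow (n : ℤ) : (sx2 ^ n).1 = !![1, 0; 2 * n, 1] := by
  induction n using Int.induction_on with
  | zero => simp [Matrix.one_fin_two]
  | succ n ih => rw [_root_.zpow_add_one, sl_mul, ih, sx2_coe]; simp; ring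
  | pred n ih => rw [_root_.zpow_sub_one, sl_mul, ih, sx2_inv]; simp; ring

theorem sl2_smul (A : SL2) (v : Fin 2 → ℤ) : A • v = A.1.mulVec v := rfl

theorem sv_inj : Function.Injective sv := by
  have : sv =
      (Monoid.CoprodI.lift fun i => FreeGroup.lift fun _ => if i then sx1 else sx2).comp
        (@freeGroupEquivCoprodI Bool).toMonoidHom := by
    ext1 i
    simp [sv]
  rw [this, MonoidHom.coe_comp]
  clear this
  refine Function.Injective.comp ?_ (MulEquiv.injective freeGroupEquivCoprodI)
  change Function.Injective (Monoid.CoprodI.lift fun i : Bool =>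
    FreeGroup.lift fun _ : Unit => if i then sx1 else sx2)
  let H : Bool → Type := fun _ => FreeGroup Unit
  let f : ∀ i, H i →* SL2 := fun i => FreeGroup.lift fun _ => if i then sx1 else sx2
  let X : Bool → Set (Fin 2 → ℤ) := fun i => if i then {v | |v 1| < |v 0|} else {v | |v 0| < |v 1|}
  apply Monoid.CoprodI.lift_injective_of_ping_pong f _ X
  · intro i
    cases i
    · exact ⟨![0, 1], by simp [X]⟩
    · exact ⟨![1, 0], by simp [X]⟩
  · have h : Disjoint (X true) (X false) := by
      rw [Set.disjoint_left]
      intro v h1 h2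
      simp [X] at h1 h2
      exact lt_asymm h1 h2
    intro i j hij
    cases i <;> cases j
    · exact (hij rfl).elim
    · exact h.symm
    · exact h
    · exact (hij rfl).elim
  · change Pairwise fun i j => ∀ h : H i, h ≠ 1 → f i h • X j ⊆ X i
    rintro i j hij
    refine FreeGroup.freeGroupUnitEquivInt.forall_congr_left.mpr ?_
    intro n hne1
    change FreeGroup.lift (fun _ => if i then sx1 else sx2) (FreeGroup.of () ^ n) • X j ⊆ X i
    simp only [map_zpow, FreeGroup.lift_apply_of]
    have hn : n ≠ 0 := by
      rintro rfl
      apply hne1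
      simp [H, FreeGroup.freeGroupUnitEquivInt]
    clear hne1
    have key : ∀ a b : ℤ, |a| < |b| → |b| < |a + 2 * n * b| := by
      intro a b h
      have h1 : 1 ≤ |n| := Int.one_le_abs hn
      have h2 : |2 * n * b| = 2 * |n| * |b| := by rw [abs_mul, abs_mul]; simp
      have h3 : |2 * n * b| ≤ |a + 2 * n * b| + |a| := by
        have := abs_sub (a + 2 * n * b) a
        simpa using this
      have h4 : 2 * 1 * |b| ≤ 2 * |n| * |b| := by
        apply mul_le_mul_of_nonneg_right _ (abs_nonneg b); linarith
      linarith
    rintro _ ⟨v, hv, rfl⟩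
    cases i <;> cases j
    · exact (hij rfl).elim
    · simp [X] at hv ⊢
      rw [sl2_smul, sx2_zpow]
      have := key _ _ hv
      simp [Matrix.mulVec, dotProduct, Fin.sum_univ_two]
      rwa [add_comm]
    · simp [X] at hv ⊢
      rw [sl2_smul, sx1_zpow]
      have := key _ _ hv
      simpa [Matrix.mulVec, dotProduct, Fin.sum_univ_two]
    · exact (hij rfl).elim
  · right
    refine ⟨true, ?_⟩
    simp only [H]
    rw [FreeGroup.freeGroupUnitEquivInt.cardinal_eq, Cardinal.mk_denumerable]
    exact Cardinal.natCast_le_aleph0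

theorem sanov (n : ℕ) : ∀ A : SL2, (A.1 0 0).natAbs + (A.1 1 0).natAbs ≤ n →
    A.1 0 0 % 4 = 1 → A.1 1 1 % 4 = 1 → A.1 0 1 % 2 = 0 → A.1 1 0 % 2 = 0 → A ∈ sv.range := by
  have m1 : sx1 ∈ sv.range := ⟨ga, sv_ga⟩
  have m2 : sx2 ∈ sv.range := ⟨gt, sv_gt⟩
  induction n with
  | zero => intro A h h0; omega
  | succ n ih =>
    intro A h h0 h1 h2 h3
    by_cases hc : A.1 1 0 = 0
    · have hd := A.2
      rw [Matrix.det_fin_two, hc, mul_zero, sub_zero] at hd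
      have ha : A.1 0 0 = 1 := by
        rcases Int.eq_one_or_neg_one_of_mul_eq_one hd with h | h <;> omega
      rw [ha, one_mul] at hd
      have : A = sx1 ^ (A.1 0 1 / 2) := by
        apply Subtype.ext
        rw [sx1_zpow]
        ext i j
        fin_cases i <;> fin_cases j
        · simpa using ha
        · simp; omega
        · simpa using hc
        · simpa using hd
      rw [this]
      exact zpow_mem m1 _
    have red : ∀ (E : SL2) (k : ℤ), E = sx1 ^ k ∨ E = sx2 ^ k → E ∈ sv.range := by
      rintro E k (rfl | rfl)
      · exact zpow_mem m1 _
      · exact zpow_mem m2 _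
    have step1 : ∀ k : ℤ, (A.1 0 0 + 2 * k * A.1 1 0).natAbs + (A.1 1 0).natAbs ≤ n → A ∈ sv.range := by
      intro k hk
      have e00 : (sx1 ^ k * A).1 0 0 = A.1 0 0 + 2 * (k * A.1 1 0) := by
        rw [sl_mul, sx1_zpow]; simp [Matrix.mul_apply, Fin.sum_univ_two, mul_assoc]
      have e01 : (sx1 ^ k * A).1 0 1 = A.1 0 1 + 2 * (k * A.1 1 1) := by
        rw [sl_mul, sx1_zpow]; simp [Matrix.mul_apply, Fin.sum_univ_two, mul_assoc]
      have e10 : (sx1 ^ k * A).1 1 0 = A.1 1 0 := by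
        rw [sl_mul, sx1_zpow]; simp [Matrix.mul_apply, Fin.sum_univ_two]
      have e11 : (sx1 ^ k * A).1 1 1 = A.1 1 1 := by
        rw [sl_mul, sx1_zpow]; simp [Matrix.mul_apply, Fin.sum_univ_two]
      have := ih (sx1 ^ k * A) (by rw [e00, e10]; rw [mul_assoc] at hk; exact hk)
        (by rw [e00]
            obtain ⟨c, hc⟩ : ∃ c, A.1 1 0 = 2 * c := ⟨A.1 1 0 / 2, by omega⟩
            rw [hc, show 2 * (k * (2 * c)) = 4 * (k * c) by ring]; omega)
        (by rw [e11]; exact h1) (by rw [e01]; omega) (by rw [e10]; exact h3)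
      exact (Subgroup.mul_mem_cancel_left _ (zpow_mem m1 k)).1 this
    have step2 : ∀ k : ℤ, (A.1 0 0).natAbs + (A.1 1 0 + 2 * k * A.1 0 0).natAbs ≤ n → A ∈ sv.range := by
      intro k hk
      have e00 : (sx2 ^ k * A).1 0 0 = A.1 0 0 := by
        rw [sl_mul, sx2_zpow]; simp [Matrix.mul_apply, Fin.sum_univ_two]
      have e01 : (sx2 ^ k * A).1 0 1 = A.1 0 1 := by
        rw [sl_mul, sx2_zpow]; simp [Matrix.mul_apply, Fin.sum_univ_two]
      have e10 : (sx2 ^ k * A).1 1 0 = A.1 1 0 + 2 * (k * A.1 0 0) := by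
        rw [sl_mul, sx2_zpow]; simp [Matrix.mul_apply, Fin.sum_univ_two, mul_assoc, add_comm]
      have e11 : (sx2 ^ k * A).1 1 1 = A.1 1 1 + 2 * (k * A.1 0 1) := by
        rw [sl_mul, sx2_zpow]; simp [Matrix.mul_apply, Fin.sum_univ_two, mul_assoc, add_comm]
      have := ih (sx2 ^ k * A) (by rw [e00, e10]; rw [mul_assoc] at hk; exact hk)
        (by rw [e00]; exact h0)
        (by rw [e11]
            obtain ⟨c, hc⟩ : ∃ c, A.1 0 1 = 2 * c := ⟨A.1 0 1 / 2, by omega⟩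
            rw [hc, show 2 * (k * (2 * c)) = 4 * (k * c) by ring]; omega)
        (by rw [e01]; exact h2) (by rw [e10]; omega)
      exact (Subgroup.mul_mem_cancel_left _ (zpow_mem m2 k)).1 this
    have s1 := step1 1
    have s1' := step1 (-1)
    have s2 := step2 1
    have s2' := step2 (-1)
    generalize A.1 0 0 = a at *
    generalize A.1 1 0 = c at *
    by_contra hcon
    simp only [hcon, imp_false, not_le] at s1 s1' s2 s2'
    omega

theorem sv_r0 (Z : List Bool) : ((sv (rj Z 0)).1 - 1).det ≠ 0 := by
  have h : rj Z 0 = gw 1 ga gt * gw 1 ga gt := by simp [rj, relEl, relPair]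
  rw [h, map_mul, map_gw, sv_ga, sv_gt, gw, bw]
  simp only [pow_one, _root_.mul_inv_rev, inv_inv]
  simp only [sl_mul, sx1_inv, sx2_inv, sx1_coe, sx2_coe]
  simp [Matrix.det_fin_two, Matrix.one_fin_two]
end Z4F15

namespace Z4F15
open Matrix

abbrev M2 := Matrix (Fin 2) (Fin 2) ℤ
abbrev GLs := Matrix.GeneralLinearGroup (Fin 2 ⊕ Fin 2) ℤ

theorem cancel_left {A B : M2} (hA : A.det ≠ 0) (h : A * B = 0) : B = 0 := by
  have h1 : A.adjugate * (A * B) = 0 := by rw [h, Matrix.mul_zero]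
  rw [← Matrix.mul_assoc, Matrix.adjugate_mul, Matrix.smul_mul, Matrix.one_mul] at h1
  exact (smul_eq_zero.1 h1).resolve_left hA

theorem cancel_right {A B : M2} (hA : A.det ≠ 0) (h : B * A = 0) : B = 0 := by
  have h1 : (B * A) * A.adjugate = 0 := by rw [h, Matrix.zero_mul]
  rw [Matrix.mul_assoc, Matrix.mul_adjugate, Matrix.mul_smul, Matrix.mul_one] at h1
  exact (smul_eq_zero.1 h1).resolve_left hA

theorem unip {s : M2} (hs : s.det = 1) (h : (s - 1).det = 0) : (s - 1) * (s - 1) = 0 := by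
  rw [Matrix.det_fin_two] at hs h
  simp at h
  ext i j
  fin_cases i <;> fin_cases j <;> simp [Matrix.mul_apply, Fin.sum_univ_two]
  · have : s 0 0 + s 1 1 = 2 := by linarith
    have h2 : s 1 1 = 2 - s 0 0 := by linarith
    rw [h2] at h; linarith
  · have h2 : s 1 1 = 2 - s 0 0 := by linarith
    rw [h2]; ring
  · have h2 : s 1 1 = 2 - s 0 0 := by linarith
    rw [h2]; ring
  · have h2 : s 0 0 = 2 - s 1 1 := by linarith
    rw [h2] at h; linarith

theorem inter_zero {s n Q : M2} (hs : s.det = 1) (h : (s - 1).det = 0) (hn : (n - 1).det ≠ 0)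
    (hQ : Q * n = s * Q) : Q = 0 := by
  have h1 : Q * (n - 1) = (s - 1) * Q := by rw [Matrix.mul_sub, Matrix.sub_mul, hQ]; simp
  have h2 : Q * (n - 1) * (n - 1) = 0 := by
    rw [h1, Matrix.mul_assoc, h1, ← Matrix.mul_assoc, unip hs h, Matrix.zero_mul]
  exact cancel_right hn (cancel_right hn h2)

theorem block (R : GLs) (n s t : M2) (hn : (n - 1).det ≠ 0) (hs : s.det = 1) (ht : t.det = 1)
    (h : R.1 * fromBlocks 1 0 0 n = fromBlocks s 0 0 t * R.1) :
    ∃ A D : M2, R.1 * R.1 = fromBlocks A 0 0 D := by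
  have hdet : R.1.det ≠ 0 := by
    have := (Matrix.isUnit_iff_isUnit_det _).1 R.isUnit
    exact this.ne_zero
  rw [← fromBlocks_toBlocks R.1] at h hdet ⊢
  generalize R.1.toBlocks₁₁ = P at *
  generalize R.1.toBlocks₁₂ = Q at *
  generalize R.1.toBlocks₂₁ = U at *
  generalize R.1.toBlocks₂₂ = V at *
  rw [fromBlocks_multiply, fromBlocks_multiply, fromBlocks_inj] at h
  simp at h
  obtain ⟨h1, h2, h3, h4⟩ := h
  have h1' : (s - 1) * P = 0 := by rw [Matrix.sub_mul, ← h1]; simp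
  have h3' : (t - 1) * U = 0 := by rw [Matrix.sub_mul, ← h3]; simp
  by_cases ds : (s - 1).det = 0
  · have hQ := inter_zero hs ds hn h2
    subst hQ
    by_cases dt : (t - 1).det = 0
    · have hV := inter_zero ht dt hn h4
      subst hV
      rw [det_fromBlocks_zero₁₂] at hdet
      simp at hdet
    · have hU := cancel_left dt h3'
      subst hU
      exact ⟨P * P, V * V, by rw [fromBlocks_multiply]; simp⟩
  · have hP := cancel_left ds h1'
    subst hP
    by_cases dt : (t - 1).det = 0
    · have hV := inter_zero ht dt hn h4
      subst hV
      exact ⟨Q * U, U * Q, by rw [fromBlocks_multiply]; simp⟩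
    · have hU := cancel_left dt h3'
      subst hU
      rw [det_fromBlocks_zero₂₁] at hdet
      simp at hdet

theorem pow_sanov : ∃ j : ℕ, 0 < j ∧ ∀ A : M2, IsUnit A → ∃ u : F2, A ^ j = (sv u).1 := by
  let G4 := Matrix.GeneralLinearGroup (Fin 2) (ZMod 4)
  refine ⟨2 * Nat.card G4, by have : 0 < Nat.card G4 := Nat.card_pos; omega, ?_⟩
  rintro _ ⟨A, rfl⟩
  have hdet : (A.1 ^ (2 * Nat.card G4)).det = 1 := by
    rw [Matrix.det_pow, pow_mul]
    have := (Matrix.isUnit_iff_isUnit_det _).1 A.isUnit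
    rcases Int.isUnit_iff.1 this with h | h <;> rw [h] <;> simp
  have hmod : Matrix.GeneralLinearGroup.map (Int.castRingHom (ZMod 4)) (A ^ (2 * Nat.card G4)) = 1 := by
    rw [map_pow, mul_comm, pow_mul, pow_card_eq_one', one_pow]
  generalize 2 * Nat.card G4 = m at hdet hmod ⊢
  have hent : ∀ i j, ((A.1 ^ m) i j : ZMod 4) = (1 : Matrix (Fin 2) (Fin 2) (ZMod 4)) i j := by
    intro i j
    have := congrArg (fun z : G4 => z.1 i j) hmod
    rw [← Units.val_pow_eq_pow_val]
    exact this
  have hc : ∀ a : ℤ, ∀ b : ℤ, (a : ZMod 4) = (b : ℤ) → a % 4 = b % 4 := by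
    intro a b h
    exact (ZMod.intCast_eq_intCast_iff' a b 4).1 h
  have e00 := hc _ 1 (by simpa using hent 0 0)
  have e01 := hc _ 0 (by simpa using hent 0 1)
  have e10 := hc _ 0 (by simpa using hent 1 0)
  have e11 := hc _ 1 (by simpa using hent 1 1)
  obtain ⟨u, hu⟩ := sanov _ (⟨A.1 ^ m, hdet⟩ : SL2) le_rfl (by simpa using e00) (by simpa using e11)
    (by show (A.1 ^ m) 0 1 % 2 = 0; omega) (by show (A.1 ^ m) 1 0 % 2 = 0; omega)
  exact ⟨u, by rw [hu]⟩

def bds : SL2 × SL2 →* GLs where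
  toFun p := ⟨fromBlocks p.1.1 0 0 p.2.1, fromBlocks (p.1⁻¹).1 0 0 (p.2⁻¹).1,
    by rw [fromBlocks_multiply, ← sl_mul, ← sl_mul]; simp,
    by rw [fromBlocks_multiply, ← sl_mul, ← sl_mul]; simp⟩
  map_one' := by ext1; simp
  map_mul' p q := by
    apply Units.ext
    show fromBlocks _ _ _ _ = fromBlocks _ _ _ _ * fromBlocks _ _ _ _
    rw [fromBlocks_multiply]; simp

theorem bds_coe (p : SL2 × SL2) : (bds p).1 = fromBlocks p.1.1 0 0 p.2.1 := rfl

def rho : GLs ≃* GL4 := Units.mapEquiv (Matrix.reindexAlgEquiv ℤ ℤ finSumFinEquiv).toMulEquiv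

def bdF : F2 × F2 →* GLs := bds.comp (sv.prodMap sv)

theorem bdF_coe (p : F2 × F2) : (bdF p).1 = fromBlocks (sv p.1).1 0 0 (sv p.2).1 := rfl

theorem bdF_inj : Function.Injective bdF := by
  rintro ⟨a, b⟩ ⟨c, d⟩ h
  have h1 := congrArg Units.val h
  rw [bdF_coe, bdF_coe, fromBlocks_inj] at h1
  exact Prod.ext (sv_inj (Subtype.ext h1.1)) (sv_inj (Subtype.ext h1.2.2.2))

def yy (Z : List Bool) (w : F2) : Fin 15 → F2 × F2 :=
  Fin.snoc (α := fun _ => F2 × F2) (Fin.cons (α := fun _ => F2 × F2) (ga, ga)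
    (Fin.cons (α := fun _ => F2 × F2) (gt, gt) (fun i : Fin 12 => (1, rj Z i)))) (1, w)

def fY (Z : List Bool) (w : F2) (i : Fin 15) : GL4 := rho (bdF (yy Z w i))

theorem yy_last (Z w) : yy Z w (Fin.last 14) = (1, w) := by simp [yy, -Fin.reduceLast]
theorem yy_cast (Z w) (i : Fin 14) : yy Z w i.castSucc = Fin.cons (α := fun _ => F2 × F2) (ga, ga)
    (Fin.cons (α := fun _ => F2 × F2) (gt, gt) (fun i : Fin 12 => (1, rj Z i))) i := by
  rw [yy, Fin.snoc_castSucc]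

/-- the fibre product generated by the first fourteen elements -/
def Hs (Z : List Bool) : Subgroup (F2 × F2) :=
  (FreeGroup.lift (fun i : Fin 14 => yy Z 1 i.castSucc)).range

theorem Hs_le (Z : List Bool) (p : F2 × F2) (hp : p ∈ Hs Z) : p.1⁻¹ * p.2 ∈ NZ Z := by
  have : (NZ Z).Normal := Subgroup.normalClosure_normal
  obtain ⟨u, rfl⟩ := hp
  have : ((QuotientGroup.mk' (NZ Z)).comp (MonoidHom.fst F2 F2)).comp
        (FreeGroup.lift (fun i : Fin 14 => yy Z 1 i.castSucc)) =
      ((QuotientGroup.mk' (NZ Z)).comp (MonoidHom.snd F2 F2)).comp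
        (FreeGroup.lift (fun i : Fin 14 => yy Z 1 i.castSucc)) := by
    ext1 i
    simp only [MonoidHom.comp_apply, FreeGroup.lift_apply_of, yy_cast]
    induction i using Fin.cases with
    | zero => rfl
    | succ i =>
      induction i using Fin.cases with
      | zero => rfl
      | succ i =>
        simp
        symm
        exact (QuotientGroup.eq_one_iff _).2 (Subgroup.subset_normalClosure ⟨i, rfl⟩)
  exact QuotientGroup.eq.1 (DFunLike.congr_fun this u)

theorem Hs_mem (Z : List Bool) (n : F2) (hn : n ∈ NZ Z) : (1, n) ∈ Hs Z := by
  have hgen : ∀ i : Fin 14, yy Z 1 i.castSucc ∈ Hs Z := fun i => ⟨FreeGroup.of i, by simp⟩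
  have hd : ∀ u : F2, (u, u) ∈ Hs Z := by
    intro u
    have h : (⊤ : Subgroup F2) ≤ (Hs Z).comap ((MonoidHom.id F2).prod (MonoidHom.id F2)) := by
      rw [← FreeGroup.closure_range_of, Subgroup.closure_le]
      rintro _ ⟨b, rfl⟩
      cases b
      · have := hgen 1
        rw [yy_cast] at this
        exact this
      · have := hgen 0
        rw [yy_cast] at this
        exact this
    exact h (Subgroup.mem_top u)
  let K : Subgroup F2 := (Hs Z).comap (MonoidHom.inr F2 F2)
  have hK : K.Normal := ⟨fun a ha g => by
    have := (Hs Z).mul_mem ((Hs Z).mul_mem (hd g) ha) ((Hs Z).inv_mem (hd g))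
    simpa [K] using this⟩
  have : NZ Z ≤ K := by
    apply Subgroup.normalClosure_le_normal
    rintro _ ⟨i, rfl⟩
    have := hgen i.succ.succ
    rw [yy_cast] at this
    show (1, rj Z i) ∈ Hs Z
    simpa using this
  exact this hn

theorem range_fY (Z w) (h : GLs) :
    rho h ∈ (FreeGroup.lift (fY Z w)).range ↔ ∃ p ∈ (FreeGroup.lift (yy Z w)).range, h = bdF p := by
  have : FreeGroup.lift (fY Z w) = (rho.toMonoidHom.comp bdF).comp (FreeGroup.lift (yy Z w)) := by
    ext1 i; simp [fY]
  rw [this]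
  constructor
  · rintro ⟨u, hu⟩
    exact ⟨_, ⟨u, rfl⟩, (rho.injective hu).symm⟩
  · rintro ⟨_, ⟨u, rfl⟩, rfl⟩
    exact ⟨u, rfl⟩

theorem range_yy_le (Z w) : Hs Z ≤ (FreeGroup.lift (yy Z w)).range := by
  rintro _ ⟨u, rfl⟩
  refine ⟨FreeGroup.map Fin.castSucc u, ?_⟩
  have : (FreeGroup.lift (yy Z w)).comp (FreeGroup.map Fin.castSucc) =
    FreeGroup.lift (fun i : Fin 14 => yy Z 1 i.castSucc) := by
    ext1 i; simp [yy_cast]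
  exact DFunLike.congr_fun this u

theorem range_yy_one (Z) : (FreeGroup.lift (yy Z 1)).range ≤ Hs Z := by
  rw [FreeGroup.range_lift_eq_closure, Subgroup.closure_le]
  rintro _ ⟨i, rfl⟩
  induction i using Fin.lastCases with
  | last => rw [yy_last]; exact (Hs Z).one_mem
  | cast i => exact ⟨FreeGroup.of i, by simp⟩

open GLPrimcodable in
theorem main_equiv (Z : List Bool) (w : F2) :
    Nonempty ((Multiplicative (Fin 4 → ℤ) ⋊[phiOf (fY Z 1)] FreeGroup (Fin 15)) ≃*
      (Multiplicative (Fin 4 → ℤ) ⋊[phiOf (fY Z w)] FreeGroup (Fin 15))) ↔ w ∈ NZ Z := by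
  constructor
  · rintro ⟨Ψ⟩
    obtain ⟨R4, hR4⟩ := gl_conj _ _ Ψ
    obtain ⟨R, rfl⟩ := rho.surjective R4
    have hR : ∀ p ∈ (FreeGroup.lift (yy Z w)).range, ∃ q ∈ Hs Z, R * bdF p * R⁻¹ = bdF q := by
      intro p hp
      have h1 := hR4 (rho (bdF p)) ((range_fY Z w _).2 ⟨p, hp, rfl⟩)
      rw [← map_inv, ← map_mul, ← map_mul, range_fY] at h1
      obtain ⟨q, hq, h⟩ := h1
      exact ⟨q, range_yy_one Z hq, h⟩
    have hRm : ∀ m : ℕ, ∀ p ∈ (FreeGroup.lift (yy Z w)).range,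
        ∃ q ∈ Hs Z, R ^ (m + 1) * bdF p * (R ^ (m + 1))⁻¹ = bdF q := by
      intro m
      induction m with
      | zero => simpa using hR
      | succ m ih =>
        intro p hp
        obtain ⟨q, hq, h⟩ := ih p hp
        obtain ⟨q', hq', h'⟩ := hR q (range_yy_le Z w hq)
        refine ⟨q', hq', ?_⟩
        rw [← h', ← h, pow_succ' R (m + 1)]
        group
    have hr0 : rj Z 0 ∈ NZ Z := Subgroup.subset_normalClosure ⟨0, rfl⟩
    obtain ⟨q, hq, h⟩ := hR _ (range_yy_le Z w (Hs_mem Z _ hr0))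
    have hb : R.1 * fromBlocks 1 0 0 (sv (rj Z 0)).1 = fromBlocks (sv q.1).1 0 0 (sv q.2).1 * R.1 := by
      have h1 := congrArg Units.val (mul_inv_eq_iff_eq_mul.1 h)
      rw [Units.val_mul, Units.val_mul, bdF_coe, bdF_coe] at h1
      simpa using h1
    obtain ⟨A, D, hAD⟩ := block R _ _ _ (sv_r0 Z) (sv q.1).2 (sv q.2).2 hb
    have hu : IsUnit (A.det * D.det) := by
      have := (Matrix.isUnit_iff_isUnit_det _).1 (R * R).isUnit
      rwa [Units.val_mul, hAD, det_fromBlocks_zero₂₁] at this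
    have hA : IsUnit A := (Matrix.isUnit_iff_isUnit_det _).2 (isUnit_of_mul_isUnit_left hu)
    have hD : IsUnit D := (Matrix.isUnit_iff_isUnit_det _).2 (isUnit_of_mul_isUnit_right hu)
    obtain ⟨j, hj, hS⟩ := pow_sanov
    obtain ⟨α, hα⟩ := hS A hA
    obtain ⟨δ, hδ⟩ := hS D hD
    have hpow : R ^ (2 * j) = bdF (α, δ) := by
      apply Units.ext
      rw [pow_mul, Units.val_pow_eq_pow_val, pow_two, Units.val_mul, hAD, bdF_coe, ← hα, ← hδ]
      clear hα hδ hj hS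
      induction j with
      | zero => simp
      | succ j ih => rw [pow_succ, ih, fromBlocks_multiply]; simp [pow_succ]
    obtain ⟨q', hq', h'⟩ := hRm (2 * j - 1) (1, w) ⟨FreeGroup.of (Fin.last 14), by
      rw [FreeGroup.lift_apply_of, yy_last]⟩
    rw [show 2 * j - 1 + 1 = 2 * j by omega, hpow, ← map_inv, ← map_mul, ← map_mul] at h'
    have h2 := bdF_inj h'
    rw [← h2] at hq'
    have h3 := Hs_le Z _ hq'
    have hN : (NZ Z).Normal := Subgroup.normalClosure_normal
    have h4 := hN.conj_mem _ h3 δ⁻¹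
    simpa [mul_assoc] using h4
  · intro h
    apply gl_iso
    · intro i
      rw [fY, fY, yy_cast, yy_cast]
    · rw [fY, yy_last]
      exact (congrArg rho (map_one bdF)).trans (map_one rho)
    · obtain ⟨u, hu⟩ := Hs_mem Z w h
      refine ⟨u, ?_⟩
      rw [fY, yy_last, ← hu]
      have : FreeGroup.lift (fun i : Fin 14 => fY Z 1 i.castSucc) = (rho.toMonoidHom.comp bdF).comp
        (FreeGroup.lift (fun i : Fin 14 => yy Z 1 i.castSucc)) := by
        ext1 i; simp [fY]
      rw [this]; rfl
end Z4F15

namespace Z4F15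
open GLPrimcodable

theorem gl_val : Primrec (fun g : GL4 => g.1) := by
  letI : Primcodable {p : Matrix (Fin 4) (Fin 4) ℤ × Matrix (Fin 4) (Fin 4) ℤ //
      p.1 * p.2 = 1 ∧ p.2 * p.1 = 1} := Primcodable.subtype primrecPred_isUnitPair
  have h : Primrec (unitsEquivProdSubtype (Matrix (Fin 4) (Fin 4) ℤ)) := Primrec.of_equiv
  exact Primrec.fst.comp ((Primrec.subtype_val (hp := primrecPred_isUnitPair)).comp h)

theorem gl_inv_val : Primrec (fun g : GL4 => (g⁻¹).1) := by
  letI : Primcodable {p : Matrix (Fin 4) (Fin 4) ℤ × Matrix (Fin 4) (Fin 4) ℤ //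
      p.1 * p.2 = 1 ∧ p.2 * p.1 = 1} := Primcodable.subtype primrecPred_isUnitPair
  have h : Primrec (unitsEquivProdSubtype (Matrix (Fin 4) (Fin 4) ℤ)) := Primrec.of_equiv
  exact Primrec.snd.comp ((Primrec.subtype_val (hp := primrecPred_isUnitPair)).comp h)

theorem gl_mk {α : Type} [Primcodable α] {f : α → GL4} (h1 : Primrec (fun x => (f x).1))
    (h2 : Primrec (fun x => ((f x)⁻¹).1)) : Primrec f := by
  letI : Primcodable {p : Matrix (Fin 4) (Fin 4) ℤ × Matrix (Fin 4) (Fin 4) ℤ //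
      p.1 * p.2 = 1 ∧ p.2 * p.1 = 1} := Primcodable.subtype primrecPred_isUnitPair
  refine (Primrec.of_equiv_iff (unitsEquivProdSubtype (Matrix (Fin 4) (Fin 4) ℤ))).1 ?_
  refine (Primrec.subtype_val_iff (hp := primrecPred_isUnitPair)).1 ?_
  exact h1.pair h2

theorem gl_mul {α : Type} [Primcodable α] {f g : α → GL4} (hf : Primrec f) (hg : Primrec g) :
    Primrec (fun x => f x * g x) := by
  apply gl_mk
  · exact primrec_matMul.comp ((gl_val.comp hf).pair (gl_val.comp hg))
  · refine (primrec_matMul.comp ((gl_inv_val.comp hg).pair (gl_inv_val.comp hf))).of_eq fun x => ?_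
    rw [mul_inv_rev]; rfl

theorem gl_inv {α : Type} [Primcodable α] {f : α → GL4} (hf : Primrec f) :
    Primrec (fun x => (f x)⁻¹) := by
  apply gl_mk
  · exact gl_inv_val.comp hf
  · simpa using gl_val.comp hf

theorem gl_pow (G : GL4) : Primrec (fun n : ℕ => G ^ n) := by
  have h : Primrec₂ (fun (_ : ℕ) (y : GL4) => y * G) :=
    gl_mul Primrec.snd (Primrec.const G)
  refine (Primrec.nat_rec₁ (1 : GL4) h).of_eq fun n => ?_
  induction n with
  | zero => rfl
  | succ n ih => rw [pow_succ, ← ih]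

theorem gl_zpow (G : GL4) : Primrec (fun n : ℤ => G ^ n) := by
  refine (gl_mul ((gl_pow G).comp primrec_toNat) ((gl_pow G⁻¹).comp primrec_negToNat)).of_eq fun n => ?_
  rcases le_total 0 n with h | h
  · lift n to ℕ using h
    simp
  · obtain ⟨m, rfl⟩ : ∃ m : ℕ, n = -m := ⟨(-n).toNat, by omega⟩
    simp

theorem fY_primrec (Z : List Bool) (g : ℤ) : Primrec (fun a : ℤ => fY Z (wF a g)) := by
  rw [Primrec.fin_curry]
  have h : ∀ i : Fin 15, Primrec (fun a : ℤ => fY Z (wF a g) i) := by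
    intro i
    induction i using Fin.lastCases with
    | cast i => simp only [fY, yy_cast]; exact Primrec.const _
    | last =>
      simp only [fY, yy_last]
      let θ : F2 →* GL4 := (rho.toMonoidHom.comp bdF).comp (MonoidHom.inr F2 F2)
      show Primrec (fun a : ℤ => θ (wF a g))
      simp only [wF, map_wEl]
      unfold wEl TT
      simp only [cj]
      have c := fun G : GL4 => Primrec.const (α := ℤ) G
      have hT := gl_mul (gl_mul (gl_mul (gl_zpow (θ (gw 2 ga gt)))
        (c ((θ (gw 1 ga gt) * θ (gw 2 ga gt) * (θ (gw 1 ga gt))⁻¹) ^ g))) (c (θ (gw 4 ga gt))))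
        (gl_inv (gl_mul (gl_zpow (θ (gw 2 ga gt)))
        (c ((θ (gw 1 ga gt) * θ (gw 2 ga gt) * (θ (gw 1 ga gt))⁻¹) ^ g))))
      exact gl_mul (gl_mul (c _) hT) (gl_inv (gl_mul hT (c _)))
  exact (Primrec.fin_curry₁ (f := fun i (a : ℤ) => fY Z (wF a g) i)).2 h |>.swap

end Z4F15

open GLPrimcodable in
/-- There is no algorithm deciding, given two `15`-tuples of elements of `GL(4,ℤ)`, whether
the corresponding semidirect products `ℤ⁴ ⋊ F₁₅` are isomorphic. -/
theorem isomorphism_problem_Z4_by_F15_undecidable :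
    ¬ ComputablePred (fun p : (Fin 15 → Matrix.GeneralLinearGroup (Fin 4) ℤ) ×
        (Fin 15 → Matrix.GeneralLinearGroup (Fin 4) ℤ) =>
      Nonempty ((Multiplicative (Fin 4 → ℤ) ⋊[phiOf p.1] FreeGroup (Fin 15)) ≃*
        (Multiplicative (Fin 4 → ℤ) ⋊[phiOf p.2] FreeGroup (Fin 15)))) := by
  intro hP
  obtain ⟨Z, enc, hZ, henc, hnot⟩ := Z4F15.universal primrec_int_add primrec_int_mul
  apply hnot
  have hc : Computable (fun n => (Z4F15.fY Z 1, Z4F15.fY Z (Z4F15.wF (enc n) (-1)))) :=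
    (Computable.const _).pair ((Z4F15.fY_primrec Z (-1)).to_comp.comp henc)
  have h2 := ComputablePred.computable_iff.1 hP
  obtain ⟨f, hf, hfe⟩ := h2
  refine ComputablePred.computable_iff.2 ⟨_, hf.comp hc, ?_⟩
  funext n
  have h3 := congrFun hfe (Z4F15.fY Z 1, Z4F15.fY Z (Z4F15.wF (enc n) (-1)))
  simp only at h3
  rw [← h3]
  exact propext ((Z4F15.wc_mem Z hZ _ _).symm.trans (Z4F15.main_equiv Z _).symm)
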